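/- arXiv:math-ph/0412080 — 3 statements merged into one kernel-verified Lean document; each statement's English description precedes it below -/
import Mathlib

section
/- There exists a universal constant C with the following property. Let s > 0, κ ≥ 0, let z₁,…,z_k ∈ ℝ³ have pairwise distances ≥ s, and let B_j denote the open ball of radius s/2 centered at z_j (so the B_j are disjoint). Let q : ℝ³ → [0,1] be measurable, vanishing outside ∪_j B_j, with ∫_{B_j} q(x) dx ≤ κ for each j. Then for every smooth compactly supported φ : ℝ³ → ℂ, ∫_{ℝ³} q(x) |φ(x)|² dx ≤ C ( (κ/s³) ∫_{ℝ³} |φ(x)|² dx + s² ∫_{ℝ³} |∇φ(x)|² dx ). -/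
noncomputable section

open MeasureTheory Real
open scoped BigOperators

abbrev E3 := EuclideanSpace ℝ (Fin 3)

/-- `|∇φ(x)|² = Σ_a |∂_a φ(x)|²`. -/
def gradNormSq3 (f : E3 → ℂ) (x : E3) : ℝ :=
  ∑ a : Fin 3, ‖fderiv ℝ f x (EuclideanSpace.single a 1)‖ ^ 2

lemma aux_scale (h : E3 → ENNReal) (hm : Measurable h) (t : ℝ) (ht : 1/2 ≤ t) (ht1 : t ≤ 1)
    (c : E3) (r : ℝ) (x : E3) (hx : x ∈ Metric.ball c r) :
    ∫⁻ y in Metric.ball c r, h ((1 - t) • x + t • y) ≤ 8 * ∫⁻ u in Metric.ball c r, h u := by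
  have hB : MeasurableSet (Metric.ball c r) := measurableSet_ball
  have hH : Measurable ((Metric.ball c r).indicator h) := hm.indicator hB
  have ht0 : t ≠ 0 := by linarith
  calc ∫⁻ y in Metric.ball c r, h ((1 - t) • x + t • y)
      = ∫⁻ y, (Metric.ball c r).indicator (fun y => h ((1 - t) • x + t • y)) y :=
        (lintegral_indicator hB _).symm
    _ ≤ ∫⁻ y, (Metric.ball c r).indicator h ((1 - t) • x + t • y) := by
        apply lintegral_mono
        intro y
        by_cases hy : y ∈ Metric.ball c r
        · have : (1 - t) • x + t • y ∈ Metric.ball c r :=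
            (convex_ball c r) hx hy (by linarith) (by linarith) (by ring)
          simp only [Set.indicator_of_mem hy, Set.indicator_of_mem this, le_refl]
        · simp only [Set.indicator_of_notMem hy, zero_le]
    _ = ∫⁻ w, (Metric.ball c r).indicator h ((1 - t) • x + w)
          ∂(Measure.map (fun y : E3 => t • y) volume) := by
        exact (lintegral_map (f := fun w => (Metric.ball c r).indicator h ((1 - t) • x + w))
          (hH.comp (measurable_const_add _)) (measurable_const_smul t)).symm
    _ = ENNReal.ofReal |(t ^ 3)⁻¹| * ∫⁻ w, (Metric.ball c r).indicator h w := by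
        have := Measure.map_addHaar_smul (volume : Measure E3) ht0
        simp only [finrank_euclideanSpace, Fintype.card_fin] at this
        erw [this]
        rw [lintegral_smul_measure, lintegral_add_left_eq_self (μ := volume) _ ((1 - t) • x)]
        rfl
    _ ≤ 8 * ∫⁻ u in Metric.ball c r, h u := by
        rw [lintegral_indicator hB]
        gcongr
        rw [show (8 : ENNReal) = ENNReal.ofReal 8 by norm_num]
        apply ENNReal.ofReal_le_ofReal
        rw [abs_of_pos (by positivity)]
        rw [inv_le_comm₀ (by positivity) (by norm_num)]
        calc (8 : ℝ)⁻¹ = (1/2) ^ 3 := by norm_num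
          _ ≤ t ^ 3 := by gcongr

lemma aux_scale2 (h : E3 → ENNReal) (hm : Measurable h) (t : ℝ) (ht : 0 ≤ t) (ht1 : t ≤ 1)
    (c : E3) (r : ℝ) :
    ∫⁻ x in Metric.ball c r, ∫⁻ y in Metric.ball c r, h ((1 - t) • x + t • y)
      ≤ 8 * volume (Metric.ball c r) * ∫⁻ u in Metric.ball c r, h u := by
  have key : ∀ t : ℝ, 1/2 ≤ t → t ≤ 1 →
      ∫⁻ x in Metric.ball c r, ∫⁻ y in Metric.ball c r, h ((1 - t) • x + t • y)
      ≤ 8 * volume (Metric.ball c r) * ∫⁻ u in Metric.ball c r, h u := by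
    intro t h1 h2
    calc _ ≤ ∫⁻ x in Metric.ball c r, (8 * ∫⁻ u in Metric.ball c r, h u) :=
          setLIntegral_mono' measurableSet_ball (fun x hx => aux_scale h hm t h1 h2 c r x hx)
      _ = _ := by rw [setLIntegral_const]; ring
  by_cases h1 : 1/2 ≤ t
  · exact key t h1 ht1
  · rw [lintegral_lintegral_swap]
    · have := key (1 - t) (by linarith) (by linarith)
      refine le_trans (le_of_eq ?_) this
      congr 1
      ext y
      congr 1
      ext x
      congr 1
      rw [add_comm]; simp
    · apply Measurable.aemeasurable
      apply hm.comp
      fun_prop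

lemma aux_pt (φ : E3 → ℂ) (hφ : ContDiff ℝ 1 φ) (x y : E3) :
    ‖φ y - φ x‖ ^ 2 ≤ ‖y - x‖ ^ 2 *
      ∫ t in (0:ℝ)..1, ‖fderiv ℝ φ ((1 - t) • x + t • y)‖ ^ 2 := by
  have hc : Continuous (fderiv ℝ φ) := hφ.continuous_fderiv (by norm_num)
  have hline : Continuous (fun t : ℝ => (1 - t) • x + t • y) := by fun_prop
  set f : ℝ → ℝ := fun t => ‖fderiv ℝ φ ((1 - t) • x + t • y)‖ with hf
  have hfc : Continuous f := (hc.comp hline).norm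
  have hd : ∀ t ∈ Set.uIcc (0:ℝ) 1, HasDerivAt (fun t : ℝ => φ ((1 - t) • x + t • y))
      (fderiv ℝ φ ((1 - t) • x + t • y) (y - x)) t := by
    intro t _
    have h1 : HasDerivAt (fun t : ℝ => (1 - t) • x + t • y) (y - x) t := by
      have := (((hasDerivAt_id t).const_sub 1).smul_const x).add ((hasDerivAt_id t).smul_const y)
      have e : y - x = (-1 : ℝ) • x + (1 : ℝ) • y := by
        rw [neg_smul, one_smul, one_smul]; abel
      rw [e]
      exact this
    exact ((hφ.differentiable (by norm_num)).differentiableAt.hasFDerivAt).comp_hasDerivAt t h1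
  have hcd : Continuous (fun t : ℝ => fderiv ℝ φ ((1 - t) • x + t • y) (y - x)) :=
    (hc.comp hline).clm_apply continuous_const
  have h1 := intervalIntegral.integral_eq_sub_of_hasDerivAt hd (hcd.intervalIntegrable 0 1)
  simp only [sub_self, zero_smul, one_smul, zero_add, sub_zero, add_zero] at h1
  have h2 : ‖φ y - φ x‖ ≤ ‖y - x‖ * ∫ t in (0:ℝ)..1, f t := by
    rw [← h1, ← intervalIntegral.integral_const_mul]
    apply intervalIntegral.norm_integral_le_of_norm_le zero_le_one
    · filter_upwards with t _
      rw [mul_comm]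
      exact ContinuousLinearMap.le_opNorm _ _
    · exact (hfc.const_mul _).intervalIntegrable 0 1
  have h3 : (∫ t in (0:ℝ)..1, f t) ^ 2 ≤ ∫ t in (0:ℝ)..1, f t ^ 2 := by
    set c := ∫ t in (0:ℝ)..1, f t with hcdef
    have h0 : 0 ≤ ∫ t in (0:ℝ)..1, (f t - c) ^ 2 :=
      intervalIntegral.integral_nonneg zero_le_one (fun t _ => sq_nonneg _)
    have e : (∫ t in (0:ℝ)..1, (f t - c) ^ 2) = (∫ t in (0:ℝ)..1, f t ^ 2) - 2 * c * c + c ^ 2 := by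
      have : ∀ t, (f t - c) ^ 2 = f t ^ 2 - 2 * c * f t + c ^ 2 := fun t => by ring
      simp_rw [this]
      rw [intervalIntegral.integral_add, intervalIntegral.integral_sub,
        intervalIntegral.integral_const_mul, intervalIntegral.integral_const]
      · simp [← hcdef]
      all_goals apply Continuous.intervalIntegrable; fun_prop
    nlinarith
  calc ‖φ y - φ x‖ ^ 2 ≤ (‖y - x‖ * ∫ t in (0:ℝ)..1, f t) ^ 2 := by gcongr
    _ = ‖y - x‖ ^ 2 * (∫ t in (0:ℝ)..1, f t) ^ 2 := by ring
    _ ≤ _ := by gcongr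

lemma aux_pt2 (φ : E3 → ℂ) (hφ : ContDiff ℝ 1 φ) (c : E3) (s : ℝ) (x y : E3)
    (hx : x ∈ Metric.ball c (s / 2)) (hy : y ∈ Metric.ball c (s / 2)) :
    ENNReal.ofReal (‖φ x - φ y‖ ^ 2) ≤ ENNReal.ofReal (s ^ 2) *
      ∫⁻ t in Set.Ioc (0:ℝ) 1, ENNReal.ofReal (‖fderiv ℝ φ ((1 - t) • x + t • y)‖ ^ 2) := by
  have hc : Continuous (fderiv ℝ φ) := hφ.continuous_fderiv (by norm_num)
  have hcc : Continuous (fun t : ℝ => ‖fderiv ℝ φ ((1 - t) • x + t • y)‖ ^ 2) := by fun_prop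
  rw [← ofReal_integral_eq_lintegral_ofReal, ← ENNReal.ofReal_mul (by positivity)]
  · apply ENNReal.ofReal_le_ofReal
    rw [norm_sub_rev]
    refine (aux_pt φ hφ x y).trans ?_
    rw [intervalIntegral.integral_of_le zero_le_one]
    have : ‖y - x‖ ≤ s := by
      rw [← dist_eq_norm]
      have := dist_triangle_right y x c
      have := Metric.mem_ball.1 hx
      have := Metric.mem_ball.1 hy
      linarith
    gcongr
  · exact (hcc.intervalIntegrable 0 1).1
  · filter_upwards with t
    positivity

lemma aux_ball_poincare (φ : E3 → ℂ) (hφ : ContDiff ℝ 1 φ) (c : E3) (s : ℝ) :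
    ∫⁻ x in Metric.ball c (s / 2), ∫⁻ y in Metric.ball c (s / 2), ENNReal.ofReal (‖φ x - φ y‖ ^ 2)
      ≤ ENNReal.ofReal (s ^ 2) * (8 * volume (Metric.ball c (s / 2)) *
        ∫⁻ u in Metric.ball c (s / 2), ENNReal.ofReal (‖fderiv ℝ φ u‖ ^ 2)) := by
  have hc : Continuous (fderiv ℝ φ) := hφ.continuous_fderiv (by norm_num)
  set B := Metric.ball c (s / 2) with hB
  set g : E3 → ENNReal := fun u => ENNReal.ofReal (‖fderiv ℝ φ u‖ ^ 2) with hg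
  have hgc : Continuous g := ENNReal.continuous_ofReal.comp (by fun_prop)
  have hgm : Measurable g := hgc.measurable
  have hm3 : Measurable (fun p : (E3 × E3) × ℝ => g ((1 - p.2) • p.1.1 + p.2 • p.1.2)) :=
    hgm.comp (by fun_prop)
  calc _ ≤ ∫⁻ x in B, ∫⁻ y in B, ENNReal.ofReal (s ^ 2) *
        ∫⁻ t in Set.Ioc (0:ℝ) 1, g ((1 - t) • x + t • y) :=
        setLIntegral_mono' measurableSet_ball fun x hx =>
          setLIntegral_mono' measurableSet_ball fun y hy => aux_pt2 φ hφ c s x y hx hy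
    _ = ENNReal.ofReal (s ^ 2) * ∫⁻ x in B, ∫⁻ y in B,
        ∫⁻ t in Set.Ioc (0:ℝ) 1, g ((1 - t) • x + t • y) := by
        rw [← lintegral_const_mul' _ _ ENNReal.ofReal_ne_top]
        congr 1; ext x
        rw [← lintegral_const_mul' _ _ ENNReal.ofReal_ne_top]
    _ = ENNReal.ofReal (s ^ 2) * ∫⁻ t in Set.Ioc (0:ℝ) 1, ∫⁻ x in B, ∫⁻ y in B,
        g ((1 - t) • x + t • y) := by
        congr 1
        have e : ∀ x, ∫⁻ y in B, ∫⁻ t in Set.Ioc (0:ℝ) 1, g ((1 - t) • x + t • y)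
            = ∫⁻ t in Set.Ioc (0:ℝ) 1, ∫⁻ y in B, g ((1 - t) • x + t • y) := by
          intro x
          rw [lintegral_lintegral_swap]
          apply Measurable.aemeasurable
          exact hgm.comp (by fun_prop)
        simp_rw [e]
        rw [lintegral_lintegral_swap]
        apply Measurable.aemeasurable
        have : Measurable (fun p : (E3 × ℝ) × E3 => g ((1 - p.1.2) • p.1.1 + p.1.2 • p.2)) :=
          hgm.comp (by fun_prop)
        exact this.lintegral_prod_right'
    _ ≤ ENNReal.ofReal (s ^ 2) * ∫⁻ t in Set.Ioc (0:ℝ) 1, (8 * volume B * ∫⁻ u in B, g u) := by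
        gcongr 1
        exact setLIntegral_mono' measurableSet_Ioc fun t ht =>
          aux_scale2 g hgm t ht.1.le ht.2 c (s / 2)
    _ = _ := by rw [setLIntegral_const]; simp

lemma aux_ball (φ : E3 → ℂ) (hφ : ContDiff ℝ 1 φ) (c : E3) (s κ : ℝ)
    (q : E3 → ℝ) (hq : Measurable q) (hq01 : ∀ x, 0 ≤ q x ∧ q x ≤ 1)
    (hκ : (∫ x in Metric.ball c (s / 2), q x) ≤ κ) :
    volume (Metric.ball c (s / 2)) *
      ∫⁻ x in Metric.ball c (s / 2), ENNReal.ofReal (q x * ‖φ x‖ ^ 2)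
     ≤ 2 * ENNReal.ofReal κ * (∫⁻ x in Metric.ball c (s / 2), ENNReal.ofReal (‖φ x‖ ^ 2))
      + volume (Metric.ball c (s / 2)) * (16 * ENNReal.ofReal (s ^ 2) *
        ∫⁻ u in Metric.ball c (s / 2), ENNReal.ofReal (‖fderiv ℝ φ u‖ ^ 2)) := by
  set B := Metric.ball c (s / 2) with hB
  have hφc : Continuous φ := hφ.continuous
  have hBf : volume B ≠ ⊤ := measure_ball_lt_top.ne
  have hqi : ∫⁻ x in B, ENNReal.ofReal (q x) ≤ ENNReal.ofReal κ := by
    rw [← ofReal_integral_eq_lintegral_ofReal]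
    · exact ENNReal.ofReal_le_ofReal hκ
    · haveI : IsFiniteMeasure (volume.restrict B) := ⟨by simpa using measure_ball_lt_top⟩
      refine Integrable.of_bound hq.aestronglyMeasurable 1 ?_
      filter_upwards with x
      rw [Real.norm_of_nonneg (hq01 x).1]; exact (hq01 x).2
    · filter_upwards with x
      exact (hq01 x).1
  have hpt : ∀ x y, ENNReal.ofReal (q x * ‖φ x‖ ^ 2) ≤
      2 * ENNReal.ofReal (q x) * ENNReal.ofReal (‖φ y‖ ^ 2)
        + 2 * ENNReal.ofReal (‖φ x - φ y‖ ^ 2) := by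
    intro x y
    obtain ⟨h0, h1⟩ := hq01 x
    rw [show (2 : ENNReal) = ENNReal.ofReal 2 by norm_num, ← ENNReal.ofReal_mul (by norm_num),
      ← ENNReal.ofReal_mul (by positivity), ← ENNReal.ofReal_mul (by norm_num),
      ← ENNReal.ofReal_add (by positivity) (by positivity)]
    apply ENNReal.ofReal_le_ofReal
    have h3 : ‖φ x‖ ≤ ‖φ y‖ + ‖φ x - φ y‖ := by
      have := norm_add_le (φ y) (φ x - φ y)
      simpa using this
    have h4 : ‖φ x‖ ^ 2 ≤ 2 * ‖φ y‖ ^ 2 + 2 * ‖φ x - φ y‖ ^ 2 := by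
      have : ‖φ x‖ ^ 2 ≤ (‖φ y‖ + ‖φ x - φ y‖) ^ 2 := by gcongr
      nlinarith [sq_nonneg (‖φ y‖ - ‖φ x - φ y‖)]
    have h5 : q x * ‖φ x - φ y‖ ^ 2 ≤ ‖φ x - φ y‖ ^ 2 :=
      mul_le_of_le_one_left (by positivity) h1
    nlinarith [mul_le_mul_of_nonneg_left h4 h0]
  have hm2 : Measurable (fun y => ENNReal.ofReal (‖φ y‖ ^ 2)) :=
    ENNReal.measurable_ofReal.comp (by fun_prop)
  have hmq : Measurable (fun y => ENNReal.ofReal (q y)) := ENNReal.measurable_ofReal.comp hq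
  have h2top : (2 : ENNReal) ≠ ⊤ := by norm_num
  calc volume B * ∫⁻ x in B, ENNReal.ofReal (q x * ‖φ x‖ ^ 2)
      = ∫⁻ x in B, ∫⁻ y in B, ENNReal.ofReal (q x * ‖φ x‖ ^ 2) := by
        rw [← lintegral_const_mul' _ _ hBf]
        congr 1; ext x
        rw [setLIntegral_const, mul_comm]
    _ ≤ ∫⁻ x in B, ∫⁻ y in B, (2 * ENNReal.ofReal (q x) * ENNReal.ofReal (‖φ y‖ ^ 2)
        + 2 * ENNReal.ofReal (‖φ x - φ y‖ ^ 2)) :=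
        lintegral_mono fun x => lintegral_mono fun y => hpt x y
    _ = 2 * (∫⁻ x in B, ENNReal.ofReal (q x)) * (∫⁻ y in B, ENNReal.ofReal (‖φ y‖ ^ 2))
        + 2 * ∫⁻ x in B, ∫⁻ y in B, ENNReal.ofReal (‖φ x - φ y‖ ^ 2) := by
        have e : ∀ x, ∫⁻ y in B, (2 * ENNReal.ofReal (q x) * ENNReal.ofReal (‖φ y‖ ^ 2)
            + 2 * ENNReal.ofReal (‖φ x - φ y‖ ^ 2)) =
            2 * ENNReal.ofReal (q x) * (∫⁻ y in B, ENNReal.ofReal (‖φ y‖ ^ 2))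
            + 2 * ∫⁻ y in B, ENNReal.ofReal (‖φ x - φ y‖ ^ 2) := by
          intro x
          rw [lintegral_add_left (hm2.const_mul _), lintegral_const_mul _ hm2,
            lintegral_const_mul' _ _ h2top]
        simp_rw [e]
        rw [lintegral_add_left ((hmq.const_mul _).mul_const _),
          lintegral_mul_const _ (hmq.const_mul _), lintegral_const_mul _ hmq,
          lintegral_const_mul' _ _ h2top]
    _ ≤ 2 * ENNReal.ofReal κ * (∫⁻ y in B, ENNReal.ofReal (‖φ y‖ ^ 2))
        + 2 * (ENNReal.ofReal (s ^ 2) * (8 * volume B *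
        ∫⁻ u in B, ENNReal.ofReal (‖fderiv ℝ φ u‖ ^ 2))) := by
        gcongr
        exact aux_ball_poincare φ hφ c s
    _ = _ := by ring

lemma aux_grad (φ : E3 → ℂ) (x : E3) : ‖fderiv ℝ φ x‖ ^ 2 ≤ gradNormSq3 φ x := by
  set L := fderiv ℝ φ x with hL
  have hG : 0 ≤ gradNormSq3 φ x := Finset.sum_nonneg fun _ _ => by positivity
  have : ‖L‖ ≤ √(gradNormSq3 φ x) := by
    apply ContinuousLinearMap.opNorm_le_bound _ (by positivity)
    intro v
    have hv : v = ∑ a : Fin 3, v a • EuclideanSpace.single a (1:ℝ) := by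
      ext i; simp [Fin.sum_univ_three, Fin.forall_fin_succ, Pi.single_apply]
      fin_cases i <;> simp
    have h1 : ‖L v‖ ≤ ∑ a : Fin 3, |v a| * ‖L (EuclideanSpace.single a 1)‖ := by
      conv_lhs => rw [hv, map_sum]
      refine (norm_sum_le _ _).trans (le_of_eq ?_)
      simp [norm_smul]
    have h2 := Finset.sum_mul_sq_le_sq_mul_sq Finset.univ (fun a : Fin 3 => |v a|)
      (fun a => ‖L (EuclideanSpace.single a 1)‖)
    rw [EuclideanSpace.norm_eq, ← Real.sqrt_mul hG]
    apply Real.le_sqrt_of_sq_le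
    calc ‖L v‖ ^ 2 ≤ (∑ a : Fin 3, |v a| * ‖L (EuclideanSpace.single a 1)‖) ^ 2 := by gcongr
      _ ≤ _ := h2
      _ = _ := by rw [mul_comm]; rfl
  calc ‖L‖ ^ 2 ≤ √(gradNormSq3 φ x) ^ 2 := by gcongr
    _ = _ := Real.sq_sqrt hG

theorem poincare_on_disjoint_balls :
    ∃ C : ℝ, 0 < C ∧
      ∀ (s κ : ℝ) (k : ℕ) (z : Fin k → E3),
        0 < s → 0 ≤ κ →
        (∀ i j, i ≠ j → s ≤ ‖z i - z j‖) →
        ∀ q : E3 → ℝ, Measurable q → (∀ x, 0 ≤ q x ∧ q x ≤ 1) →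
          (∀ x : E3, x ∉ ⋃ j, Metric.ball (z j) (s / 2) → q x = 0) →
          (∀ j, (∫ x in Metric.ball (z j) (s / 2), q x) ≤ κ) →
        ∀ φ : E3 → ℂ, ContDiff ℝ (⊤ : ℕ∞) φ → HasCompactSupport φ →
          (∫ x : E3, q x * ‖φ x‖ ^ 2)
            ≤ C * ((κ / s ^ 3) * (∫ x : E3, ‖φ x‖ ^ 2)
                + s ^ 2 * (∫ x : E3, gradNormSq3 φ x)) := by
  refine ⟨16, by norm_num, ?_⟩
  intro s κ k z hs hκ hz q hq hq01 hq0 hqκ φ hφ hφs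
  have hφ1 : ContDiff ℝ 1 φ := hφ.of_le (by exact_mod_cast le_top)
  have hφc : Continuous φ := hφ.continuous
  have hdc : Continuous (fderiv ℝ φ) := hφ1.continuous_fderiv (by norm_num)
  have hGc : Continuous (gradNormSq3 φ) := by
    unfold gradNormSq3; fun_prop
  have hGs : HasCompactSupport (gradNormSq3 φ) := by
    refine (hφs.fderiv ℝ).mono' ?_
    intro x hx
    apply subset_closure
    intro h
    apply hx
    simp [gradNormSq3, h]
  have hGi : Integrable (gradNormSq3 φ) := hGc.integrable_of_hasCompactSupport hGs
  have hPi : Integrable (fun x => ‖φ x‖ ^ 2) := by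
    apply Continuous.integrable_of_hasCompactSupport (by fun_prop)
    exact hφs.comp_left (g := fun w : ℂ => ‖w‖ ^ 2) (by simp)
  have hqPi : Integrable (fun x => q x * ‖φ x‖ ^ 2) := by
    refine hPi.bdd_mul (c := 1) hq.aestronglyMeasurable ?_
    filter_upwards with x
    rw [Real.norm_of_nonneg (hq01 x).1]; exact (hq01 x).2
  have hG0 : ∀ x, 0 ≤ gradNormSq3 φ x := fun x => Finset.sum_nonneg fun _ _ => by positivity
  set B : Fin k → Set E3 := fun j => Metric.ball (z j) (s / 2) with hBdef
  have hdisj : Pairwise (Function.onFun Disjoint B) := by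
    intro i j hij
    apply Metric.ball_disjoint_ball
    rw [dist_eq_norm]
    have := hz i j hij
    linarith
  have hBm : ∀ j, MeasurableSet (B j) := fun j => measurableSet_ball
  have hsum : ∀ f : E3 → ENNReal, ∑ j, ∫⁻ x in B j, f x = ∫⁻ x in ⋃ j, B j, f x := by
    intro f
    rw [lintegral_iUnion hBm hdisj, tsum_fintype]
  have hvol : ∀ j, volume (B j) = ENNReal.ofReal (s ^ 3 * (π / 6)) := by
    intro j
    simp only [hBdef]
    rw [EuclideanSpace.volume_ball_fin_three, ← ENNReal.ofReal_pow (by positivity),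
      ← ENNReal.ofReal_mul (by positivity)]
    congr 1; ring
  set V := s ^ 3 * (π / 6) with hV
  have hVpos : 0 < V := by positivity
  have e2 : (2 : ENNReal) = ENNReal.ofReal 2 := by norm_num
  have e16 : (16 : ENNReal) = ENNReal.ofReal 16 := by norm_num
  have main : ENNReal.ofReal V * ∫⁻ x, ENNReal.ofReal (q x * ‖φ x‖ ^ 2) ≤
      ENNReal.ofReal 2 * ENNReal.ofReal κ * (∫⁻ x, ENNReal.ofReal (‖φ x‖ ^ 2))
      + ENNReal.ofReal V * (ENNReal.ofReal 16 * ENNReal.ofReal (s ^ 2) *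
        ∫⁻ u, ENNReal.ofReal (gradNormSq3 φ u)) := by
    rw [← e2, ← e16]
    calc ENNReal.ofReal V * ∫⁻ x, ENNReal.ofReal (q x * ‖φ x‖ ^ 2)
        = ENNReal.ofReal V * ∫⁻ x in ⋃ j, B j, ENNReal.ofReal (q x * ‖φ x‖ ^ 2) := by
          congr 1
          rw [← lintegral_indicator (MeasurableSet.iUnion hBm)]
          congr 1; ext x
          by_cases hx : x ∈ ⋃ j, B j
          · rw [Set.indicator_of_mem hx]
          · rw [Set.indicator_of_notMem hx, hq0 x hx]; simp
      _ = ∑ j, ENNReal.ofReal V * ∫⁻ x in B j, ENNReal.ofReal (q x * ‖φ x‖ ^ 2) := by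
          rw [← hsum, Finset.mul_sum]
      _ ≤ ∑ j, (2 * ENNReal.ofReal κ * (∫⁻ x in B j, ENNReal.ofReal (‖φ x‖ ^ 2))
          + ENNReal.ofReal V * (16 * ENNReal.ofReal (s ^ 2) *
            ∫⁻ u in B j, ENNReal.ofReal (‖fderiv ℝ φ u‖ ^ 2))) := by
          apply Finset.sum_le_sum
          intro j _
          have := aux_ball φ hφ1 (z j) s κ q hq hq01 (hqκ j)
          have hv := hvol j
          simp only [hBdef] at hv ⊢
          rwa [hv] at this
      _ = 2 * ENNReal.ofReal κ * (∫⁻ x in ⋃ j, B j, ENNReal.ofReal (‖φ x‖ ^ 2))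
          + ENNReal.ofReal V * (16 * ENNReal.ofReal (s ^ 2) *
            ∫⁻ u in ⋃ j, B j, ENNReal.ofReal (‖fderiv ℝ φ u‖ ^ 2)) := by
          rw [Finset.sum_add_distrib, ← Finset.mul_sum, ← Finset.mul_sum, ← Finset.mul_sum,
            hsum, hsum]
      _ ≤ _ := by
          gcongr
          · exact Measure.restrict_le_self
          · exact Measure.restrict_le_self
          · exact aux_grad φ _
  have hP0 : 0 ≤ ∫ x, ‖φ x‖ ^ 2 := integral_nonneg fun x => by positivity
  have hGG0 : 0 ≤ ∫ x, gradNormSq3 φ x := integral_nonneg hG0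
  rw [← ofReal_integral_eq_lintegral_ofReal hqPi
      (Filter.Eventually.of_forall fun x => mul_nonneg (hq01 x).1 (by positivity)),
    ← ofReal_integral_eq_lintegral_ofReal hPi
      (Filter.Eventually.of_forall fun x => by positivity),
    ← ofReal_integral_eq_lintegral_ofReal hGi (Filter.Eventually.of_forall hG0),
    ← ENNReal.ofReal_mul hVpos.le, ← ENNReal.ofReal_mul (by norm_num),
    ← ENNReal.ofReal_mul (by positivity), ← ENNReal.ofReal_mul (by norm_num),
    ← ENNReal.ofReal_mul (by positivity), ← ENNReal.ofReal_mul hVpos.le,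
    ← ENNReal.ofReal_add (by positivity) (by positivity),
    ENNReal.ofReal_le_ofReal_iff (by positivity)] at main
  set I := ∫ x, q x * ‖φ x‖ ^ 2
  set P := ∫ x, ‖φ x‖ ^ 2
  set G := ∫ x, gradNormSq3 φ x
  refine le_of_mul_le_mul_left (main.trans ?_) hVpos
  have e : V * (16 * (κ / s ^ 3 * P + s ^ 2 * G)) =
      16 * (π / 6) * κ * P + V * (16 * s ^ 2 * G) := by
    rw [hV]; field_simp
  rw [e]
  have h3 := Real.pi_gt_three
  have : 2 * κ * P ≤ 16 * (π / 6) * κ * P := by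
    gcongr; linarith
  linarith
end
end

section
/- There exists a constant C, independent of all parameters below, with the following property. Let ℓ > 0, n, m ≥ 1, s > 0. Let P ⊂ (π/ℓ)·{1,2,3,…}³ with |P| = n be such that |p| ≤ |q| for every p ∈ P and every q ∈ (π/ℓ)·{1,2,3,…}³ ∖ P. For p ∈ P let φ_p(x) = (2/ℓ)^{3/2} ∏_{a=1}^3 sin(p_a x_a) for x ∈ [0,ℓ]³ and φ_p(x) = 0 otherwise, and let D_n(x₁,…,xₙ) = (n!)^{−1/2} det[φ_p(x_i)]_{p∈P, 1≤i≤n}. Fix y₁,…,y_m ∈ ℝ³, let f : ℝ³ → [0,1] be measurable, set F(x₁,…,xₙ) = ∏_{i=1}^n ∏_{j=1}^m f(x_i − y_j), and let M be the n×n matrix M_{pq} = ∫ φ_p(x) φ_q(x) ∏_{j=1}^m f(x − y_j)² dx; assume M is invertible. Let g : ℝ³ → [0,1] be measurable with g(x) = 1 for |x| ≥ 2s, and set G_n(x₁,…,xₙ) = ∏_{1≤i<j≤n} g(x_i − x_j). Then ∫_{(ℝ³)ⁿ} D_n(X)² F(X)² G_n(X)² dX ≥ ( 1 − C n^{8/3}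 ‖M^{−1}‖² (s/ℓ)⁵ ) ∫_{(ℝ³)ⁿ} D_n(X)² F(X)² dX. -/
noncomputable section

open MeasureTheory Real
open scoped BigOperators

/-- The Dirichlet eigenfunction of the Laplacian on the cube `[0,ℓ]³` with quantum
numbers `m ∈ {1,2,…}³`, extended by zero outside the cube. -/
def dirichletEig (ℓ : ℝ) (m : Fin 3 → ℕ) (x : E3) : ℝ :=
  Set.indicator {x : E3 | ∀ a, 0 ≤ x a ∧ x a ≤ ℓ}
    (fun x => (2 / ℓ) ^ ((3:ℝ)/2) * ∏ a : Fin 3, Real.sin (π * (m a : ℝ) / ℓ * x a)) x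

/-- The (real) Slater determinant `(n!)^{-1/2} det[φ_α(x_i)]`. -/
def slaterDR {n : ℕ} (φ : Fin n → E3 → ℝ) (X : Fin n → E3) : ℝ :=
  ((Nat.factorial n : ℝ) ^ (-(1:ℝ)/2)) * Matrix.det (Matrix.of fun α i => φ α (X i))

/-- Operator (ℓ²) norm of a square real matrix. -/
def matOpNormR {n : ℕ} (A : Matrix (Fin n) (Fin n) ℝ) : ℝ :=
  ‖Matrix.toEuclideanCLM (𝕜 := ℝ) A‖


lemma pair_int {α : Type*} [MeasurableSpace α] (μ : Measure α) [SigmaFinite μ] {n : ℕ}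
    (i j : Fin n) (hij : i ≠ j) (h : α → α → ℝ) (u : Fin n → α → ℝ) :
    ∫ X, h (X i) (X j) * ∏ k, u k (X k) ∂(Measure.pi fun _ : Fin n => μ) =
      (∫ z, h z.1 z.2 * (u i z.1 * u j z.2) ∂(μ.prod μ)) *
        ∏ k, if k = i ∨ k = j then 1 else ∫ x, u k x ∂μ := by
  match n, i, j, hij, u with
  | 0, i, _, _, _ => exact i.elim0
  | 1, i, j, hij, _ => exact absurd (Subsingleton.elim i j) hij
  | (n+2), i, j, hij, u =>
    obtain ⟨j, rfl⟩ := Fin.exists_succAbove_eq hij.symm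
    have e1 := (measurePreserving_piFinSuccAbove (fun _ : Fin (n+2) => μ) i).symm
    have e2 := (measurePreserving_piFinSuccAbove (fun _ : Fin (n+1) => μ) j).symm
    have e3 := (MeasurePreserving.id μ).prod e2
    have e4 := measurePreserving_prodAssoc μ μ (Measure.pi fun _ : Fin n => μ)
    rw [← e1.integral_comp']
    have hm : MeasurableEmbedding (Prod.map id (MeasurableEquiv.piFinSuccAbove (fun _ : Fin (n+1) => α) j).symm : α × (α × (Fin n → α)) → _) :=
      (((MeasurableEquiv.refl α).prodCongr (MeasurableEquiv.piFinSuccAbove (fun _ : Fin (n+1) => α) j).symm)).measurableEmbedding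
    rw [← e3.integral_comp hm, ← e4.integral_comp']
    have : ∀ z : (α × α) × (Fin n → α), 
      (fun X => h (X i) (X (i.succAbove j)) * ∏ k, u k (X k)) ((MeasurableEquiv.piFinSuccAbove (fun _ : Fin (n+2) => α) i).symm (Prod.map id (MeasurableEquiv.piFinSuccAbove (fun _ : Fin (n+1) => α) j).symm (MeasurableEquiv.prodAssoc z))) = (h z.1.1 z.1.2 * (u i z.1.1 * u (i.succAbove j) z.1.2)) * ∏ k, u (i.succAbove (j.succAbove k)) (z.2 k) := by
      rintro ⟨⟨x, y⟩, Z⟩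
      have hX : ((MeasurableEquiv.piFinSuccAbove (fun _ : Fin (n+2) => α) i).symm (Prod.map id (MeasurableEquiv.piFinSuccAbove (fun _ : Fin (n+1) => α) j).symm (MeasurableEquiv.prodAssoc ((x, y), Z)))) = i.insertNth (α := fun _ => α) x (j.insertNth (α := fun _ => α) y Z) := rfl
      rw [hX]
      simp only [Fin.prod_univ_succAbove _ i, Fin.prod_univ_succAbove _ j, Fin.insertNth_apply_same, Fin.insertNth_apply_succAbove]
      ring
    simp only [] at this
    simp_rw [this]
    rw [integral_prod_mul (fun z : α × α => h z.1 z.2 * (u i z.1 * u (i.succAbove j) z.2))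
      (fun Z : Fin n → α => ∏ k, u (i.succAbove (j.succAbove k)) (Z k)),
      integral_fintype_prod_eq_prod (fun k => u (i.succAbove (j.succAbove k)))]
    congr 1
    rw [Fin.prod_univ_succAbove _ i, Fin.prod_univ_succAbove _ j]
    simp [Fin.succAbove_ne]

lemma det_sq_expand {α : Type*} {n : ℕ} (ψ : Fin n → α → ℝ) (X : Fin n → α) :
    (Matrix.det (Matrix.of fun a i => ψ a (X i))) ^ 2 =
      ∑ σ : Equiv.Perm (Fin n), ∑ τ : Equiv.Perm (Fin n),
        (((Equiv.Perm.sign σ : ℤ) : ℝ) * ((Equiv.Perm.sign τ : ℤ) : ℝ)) *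
          ∏ k, (ψ (σ k) (X k) * ψ (τ k) (X k)) := by
  rw [sq, Matrix.det_apply', Finset.sum_mul_sum]
  refine Finset.sum_congr rfl fun σ _ => Finset.sum_congr rfl fun τ _ => ?_
  simp only [Matrix.of_apply, Finset.prod_mul_distrib]
  ring

lemma perm_agree {n : ℕ} (i j : Fin n) (hij : i ≠ j) (σ τ : Equiv.Perm (Fin n))
    (h : ∀ k, k ≠ i → k ≠ j → σ k = τ k) : τ = σ ∨ τ = σ * Equiv.swap i j := by
  have key : ∀ k, k ≠ i → k ≠ j → (σ⁻¹ * τ) k = k := by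
    intro k h1 h2
    simp [← h k h1 h2]
  have hc : (σ⁻¹ * τ) = 1 ∨ (σ⁻¹ * τ) = Equiv.swap i j := by
    generalize σ⁻¹ * τ = ρ at key
    have hi : ρ i = i ∨ ρ i = j := by
      by_contra hc
      push Not at hc
      have := key (ρ i) hc.1 hc.2
      exact hc.1 (ρ.injective this)
    have hj : ρ j = i ∨ ρ j = j := by
      by_contra hc
      push Not at hc
      have := key (ρ j) hc.1 hc.2
      exact hc.2 (ρ.injective this)
    rcases hi with hi | hi
    · left
      have hj' : ρ j = j := by
        rcases hj with hj | hj
        · exact absurd (ρ.injective (hi.trans hj.symm)) hij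
        · exact hj
      ext k
      by_cases h1 : k = i
      · simp [h1, hi]
      by_cases h2 : k = j
      · simp [h2, hj']
      simp [key k h1 h2]
    · right
      have hj' : ρ j = i := by
        rcases hj with hj | hj
        · exact hj
        · exact absurd (ρ.injective (hi.trans hj.symm)) hij
      ext k
      by_cases h1 : k = i
      · simp [h1, hi]
      by_cases h2 : k = j
      · simp [h2, hj']
      simp [key k h1 h2, Equiv.swap_apply_of_ne_of_ne h1 h2]
  rcases hc with hc | hc
  · left; exact (inv_mul_eq_one.mp hc).symm
  · right; exact eq_mul_of_inv_mul_eq hc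

section abs
variable {α : Type*} [MeasurableSpace α] (μ : Measure α) [SigmaFinite μ] {n : ℕ}

lemma int_prod_pair (ψ : Fin n → α → ℝ) (hi : ∀ a b, Integrable (fun x => ψ a x * ψ b x) μ)
    (σ τ : Equiv.Perm (Fin n)) :
    Integrable (fun X : Fin n → α => ∏ k, (ψ (σ k) (X k) * ψ (τ k) (X k))) (Measure.pi fun _ => μ) :=
  Integrable.fintype_prod (f := fun k x => ψ (σ k) x * ψ (τ k) x) (fun _ => hi _ _)

lemma int_det_sq (ψ : Fin n → α → ℝ) (hi : ∀ a b, Integrable (fun x => ψ a x * ψ b x) μ) :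
    Integrable (fun X : Fin n → α => (Matrix.det (Matrix.of fun a i => ψ a (X i))) ^ 2)
      (Measure.pi fun _ => μ) := by
  simp_rw [det_sq_expand]
  exact integrable_finsetSum _ fun σ _ => integrable_finsetSum _ fun τ _ =>
    (int_prod_pair μ ψ hi σ τ).const_mul _

lemma integral_det_sq (ψ : Fin n → α → ℝ) (hi : ∀ a b, Integrable (fun x => ψ a x * ψ b x) μ)
    (ho : ∀ a b, ∫ x, ψ a x * ψ b x ∂μ = if a = b then 1 else 0) :
    ∫ X, (Matrix.det (Matrix.of fun a i => ψ a (X i))) ^ 2 ∂(Measure.pi fun _ : Fin n => μ)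
      = (n.factorial : ℝ) := by
  simp_rw [det_sq_expand]
  rw [integral_finsetSum _ fun σ _ => integrable_finsetSum _ fun τ _ =>
    (int_prod_pair μ ψ hi σ τ).const_mul _]
  have : ∀ σ : Equiv.Perm (Fin n), ∫ X, ∑ τ : Equiv.Perm (Fin n),
        (((Equiv.Perm.sign σ : ℤ) : ℝ) * ((Equiv.Perm.sign τ : ℤ) : ℝ)) *
          ∏ k, (ψ (σ k) (X k) * ψ (τ k) (X k)) ∂(Measure.pi fun _ : Fin n => μ) = 1 := by
    intro σ
    rw [integral_finsetSum _ fun τ _ => (int_prod_pair μ ψ hi σ τ).const_mul _]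
    rw [Finset.sum_eq_single σ]
    · rw [integral_const_mul, integral_fintype_prod_eq_prod (fun k x => ψ (σ k) x * ψ (σ k) x)]
      simp only [ho, if_true, Finset.prod_const_one, mul_one]
      norm_cast
      exact Int.units_coe_mul_self _
    · intro τ _ hτ
      rw [integral_const_mul, integral_fintype_prod_eq_prod (fun k x => ψ (σ k) x * ψ (τ k) x)]
      obtain ⟨k, hk⟩ : ∃ k, σ k ≠ τ k := by
        by_contra hc
        push Not at hc
        exact hτ (Equiv.ext fun k => (hc k).symm)
      rw [Finset.prod_eq_zero (Finset.mem_univ k) (by rw [ho, if_neg hk]), mul_zero]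
    · simp
  simp [this, Fintype.card_perm]

lemma integral_det_pair (ψ : Fin n → α → ℝ) (hi : ∀ a b, Integrable (fun x => ψ a x * ψ b x) μ)
    (ho : ∀ a b, ∫ x, ψ a x * ψ b x ∂μ = if a = b then 1 else 0)
    (h : α → α → ℝ) (hm : Measurable (Function.uncurry h)) (hb : ∀ x y, ‖h x y‖ ≤ 1)
    (i j : Fin n) (hij : i ≠ j) :
    ∫ X, h (X i) (X j) * (Matrix.det (Matrix.of fun a i => ψ a (X i))) ^ 2
        ∂(Measure.pi fun _ : Fin n => μ)
      = ∑ σ : Equiv.Perm (Fin n), ∫ z, h z.1 z.2 * (ψ (σ i) z.1 ^ 2 * ψ (σ j) z.2 ^ 2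
          - (ψ (σ i) z.1 * ψ (σ j) z.1) * (ψ (σ i) z.2 * ψ (σ j) z.2)) ∂(μ.prod μ) := by
  have hmX : Measurable (fun X : Fin n → α => h (X i) (X j)) :=
    show Measurable (Function.uncurry h ∘ fun X : Fin n → α => (X i, X j)) from
      hm.comp ((measurable_pi_apply i).prodMk (measurable_pi_apply j))
  have hIntg : ∀ σ τ : Equiv.Perm (Fin n), Integrable (fun X : Fin n → α => 
      (((Equiv.Perm.sign σ : ℤ) : ℝ) * ((Equiv.Perm.sign τ : ℤ) : ℝ)) *
          (h (X i) (X j) * ∏ k, (ψ (σ k) (X k) * ψ (τ k) (X k)))) (Measure.pi fun _ => μ) := by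
    intro σ τ
    refine Integrable.const_mul ?_ _
    exact (int_prod_pair μ ψ hi σ τ).bdd_mul (c := 1) hmX.aestronglyMeasurable
      (Filter.Eventually.of_forall fun X => hb _ _)
  have e : ∀ X : Fin n → α, h (X i) (X j) * (Matrix.det (Matrix.of fun a i => ψ a (X i))) ^ 2 =
      ∑ σ : Equiv.Perm (Fin n), ∑ τ : Equiv.Perm (Fin n),
        (((Equiv.Perm.sign σ : ℤ) : ℝ) * ((Equiv.Perm.sign τ : ℤ) : ℝ)) *
          (h (X i) (X j) * ∏ k, (ψ (σ k) (X k) * ψ (τ k) (X k))) := by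
    intro X
    rw [det_sq_expand, Finset.mul_sum]
    refine Finset.sum_congr rfl fun σ _ => ?_
    rw [Finset.mul_sum]
    refine Finset.sum_congr rfl fun τ _ => ?_
    ring
  simp_rw [e]
  rw [integral_finsetSum _ fun σ _ => integrable_finsetSum _ fun τ _ => hIntg σ τ]
  refine Finset.sum_congr rfl fun σ _ => ?_
  rw [integral_finsetSum _ fun τ _ => hIntg σ τ]
  have hne : σ ≠ σ * Equiv.swap i j := by
    intro hc
    have : Equiv.swap i j = 1 := by simpa using hc.symm
    rw [Equiv.swap_eq_one_iff] at this
    exact hij this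
  have hsub : ∑ τ : Equiv.Perm (Fin n), ∫ X, (((Equiv.Perm.sign σ : ℤ) : ℝ) * ((Equiv.Perm.sign τ : ℤ) : ℝ)) *
          (h (X i) (X j) * ∏ k, (ψ (σ k) (X k) * ψ (τ k) (X k))) ∂(Measure.pi fun _ : Fin n => μ) =
      ∑ τ ∈ ({σ, σ * Equiv.swap i j} : Finset (Equiv.Perm (Fin n))), ∫ X, (((Equiv.Perm.sign σ : ℤ) : ℝ) * ((Equiv.Perm.sign τ : ℤ) : ℝ)) *
          (h (X i) (X j) * ∏ k, (ψ (σ k) (X k) * ψ (τ k) (X k))) ∂(Measure.pi fun _ : Fin n => μ) := by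
    symm
    refine Finset.sum_subset (Finset.subset_univ _) fun τ _ hτ => ?_
    rw [integral_const_mul, pair_int μ i j hij h (fun k x => ψ (σ k) x * ψ (τ k) x)]
    obtain ⟨k, h1, h2, hk⟩ : ∃ k, k ≠ i ∧ k ≠ j ∧ σ k ≠ τ k := by
      by_contra hc
      push Not at hc
      have := perm_agree i j hij σ τ hc
      simp at hτ
      tauto
    rw [Finset.prod_eq_zero (Finset.mem_univ k) (by rw [if_neg (by tauto), ho, if_neg hk]), mul_zero, mul_zero]
  have hI : ∀ a b c d, Integrable (fun z : α × α => h z.1 z.2 * ((ψ a z.1 * ψ b z.1) * (ψ c z.2 * ψ d z.2))) (μ.prod μ) := by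
    intro a b c d
    exact ((hi a b).mul_prod (hi c d)).bdd_mul (c := 1) hm.aestronglyMeasurable
      (Filter.Eventually.of_forall fun X => hb _ _)
  rw [hsub, Finset.sum_pair hne, integral_const_mul, integral_const_mul,
    pair_int μ i j hij h (fun k x => ψ (σ k) x * ψ (σ k) x),
    pair_int μ i j hij h (fun k x => ψ (σ k) x * ψ ((σ * Equiv.swap i j) k) x),
    Finset.prod_eq_one, Finset.prod_eq_one]
  · have s1 : (((Equiv.Perm.sign σ : ℤ) : ℝ) * ((Equiv.Perm.sign σ : ℤ) : ℝ)) = 1 := by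
      norm_cast
      exact Int.units_coe_mul_self _
    have s2 : (((Equiv.Perm.sign σ : ℤ) : ℝ) * ((Equiv.Perm.sign (σ * Equiv.swap i j) : ℤ) : ℝ)) = -1 := by
      rw [Equiv.Perm.sign_mul, Equiv.Perm.sign_swap hij]
      push_cast
      linarith
    rw [s1, s2]
    simp only [Equiv.Perm.mul_apply, Equiv.swap_apply_left, Equiv.swap_apply_right, mul_one]
    rw [one_mul, neg_one_mul, ← sub_eq_add_neg, ← integral_sub (hI _ _ _ _) (hI _ _ _ _)]
    refine integral_congr_ae (Filter.Eventually.of_forall fun z => ?_)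
    ring
  · intro k _
    by_cases hk : k = i ∨ k = j
    · rw [if_pos hk]
    · rw [if_neg hk]
      push Not at hk
      rw [Equiv.Perm.mul_apply, Equiv.swap_apply_of_ne_of_ne hk.1 hk.2, ho, if_pos rfl]
  · intro k _
    by_cases hk : k = i ∨ k = j
    · rw [if_pos hk]
    · rw [if_neg hk, ho, if_pos rfl]

/-- the two point function -/
lemma integral_det_pairs (ψ : Fin n → α → ℝ) (hi : ∀ a b, Integrable (fun x => ψ a x * ψ b x) μ)
    (ho : ∀ a b, ∫ x, ψ a x * ψ b x ∂μ = if a = b then 1 else 0)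
    (h : α → α → ℝ) (hm : Measurable (Function.uncurry h)) (hb : ∀ x y, ‖h x y‖ ≤ 1) :
    ∑ i, ∑ j, (if i = j then 0 else
      ∫ X, h (X i) (X j) * (Matrix.det (Matrix.of fun a i => ψ a (X i))) ^ 2
        ∂(Measure.pi fun _ : Fin n => μ))
      = (n.factorial : ℝ) * ∫ z, h z.1 z.2 * ((∑ a, ψ a z.1 ^ 2) * (∑ a, ψ a z.2 ^ 2)
          - (∑ a, ψ a z.1 * ψ a z.2) ^ 2) ∂(μ.prod μ) := by
  set T : Fin n → Fin n → ℝ := fun a b => ∫ z, h z.1 z.2 * (ψ a z.1 ^ 2 * ψ b z.2 ^ 2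
          - (ψ a z.1 * ψ b z.1) * (ψ a z.2 * ψ b z.2)) ∂(μ.prod μ) with hT
  have hT0 : ∀ a, T a a = 0 := by
    intro a
    simp only [hT]
    rw [← integral_zero (α × α) ℝ (μ := μ.prod μ)]
    refine integral_congr_ae (Filter.Eventually.of_forall fun z => ?_)
    ring
  have hI : ∀ a b c d, Integrable (fun z : α × α => h z.1 z.2 * ((ψ a z.1 * ψ b z.1) * (ψ c z.2 * ψ d z.2))) (μ.prod μ) := by
    intro a b c d
    exact ((hi a b).mul_prod (hi c d)).bdd_mul (c := 1) hm.aestronglyMeasurable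
      (Filter.Eventually.of_forall fun X => hb _ _)
  have hTI : ∀ a b, Integrable (fun z : α × α => h z.1 z.2 * (ψ a z.1 ^ 2 * ψ b z.2 ^ 2
          - (ψ a z.1 * ψ b z.1) * (ψ a z.2 * ψ b z.2))) (μ.prod μ) := by
    intro a b
    refine ((hI a a b b).sub (hI a b a b)).congr (Filter.Eventually.of_forall fun z => ?_)
    simp only [Pi.sub_apply]
    ring
  have h1 : ∀ i j : Fin n, (if i = j then 0 else
      ∫ X, h (X i) (X j) * (Matrix.det (Matrix.of fun a i => ψ a (X i))) ^ 2
        ∂(Measure.pi fun _ : Fin n => μ)) = ∑ σ : Equiv.Perm (Fin n), T (σ i) (σ j) := by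
    intro i j
    split_ifs with hij
    · subst hij
      simp [hT0]
    · exact integral_det_pair μ ψ hi ho h hm hb i j hij
  have h2 : ∑ a, ∑ b, T a b = ∫ z, h z.1 z.2 * ((∑ a, ψ a z.1 ^ 2) * (∑ a, ψ a z.2 ^ 2)
          - (∑ a, ψ a z.1 * ψ a z.2) ^ 2) ∂(μ.prod μ) := by
    simp only [hT]
    simp_rw [← integral_finsetSum Finset.univ fun b _ => hTI _ b]
    rw [← integral_finsetSum _ fun a _ => integrable_finsetSum _ fun b _ => hTI a b]
    refine integral_congr_ae (Filter.Eventually.of_forall fun z => ?_)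
    simp only [sq, Finset.sum_mul_sum, ← Finset.sum_sub_distrib]
    simp only [Finset.mul_sum]
    refine Finset.sum_congr rfl fun a _ => Finset.sum_congr rfl fun b _ => ?_
    ring
  simp_rw [h1]
  rw [← h2]
  have h3 : ∀ σ : Equiv.Perm (Fin n), ∑ i, ∑ j, T (σ i) (σ j) = ∑ a, ∑ b, T a b := by
    intro σ
    rw [← Equiv.sum_comp σ (fun a => ∑ b, T a b)]
    exact Finset.sum_congr rfl fun i _ => Equiv.sum_comp σ (fun b => T (σ i) b)
  calc ∑ i, ∑ j, ∑ σ : Equiv.Perm (Fin n), T (σ i) (σ j)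
      = ∑ i, ∑ σ : Equiv.Perm (Fin n), ∑ j, T (σ i) (σ j) :=
        Finset.sum_congr rfl fun i _ => Finset.sum_comm
    _ = ∑ σ : Equiv.Perm (Fin n), ∑ i, ∑ j, T (σ i) (σ j) := Finset.sum_comm
    _ = _ := by simp [h3, Fintype.card_perm]

end abs

open Matrix in
open scoped MatrixOrder in
lemma psd_factor {n : ℕ} (M : Matrix (Fin n) (Fin n) ℝ) (hM : M.PosSemidef) :
    ∃ S : Matrix (Fin n) (Fin n) ℝ, M = Sᵀ * S := by
  obtain ⟨S, hS⟩ := CStarAlgebra.nonneg_iff_eq_star_mul_self.mp (Matrix.nonneg_iff_posSemidef.mpr hM)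
  exact ⟨S, by simpa [star_eq_conjTranspose, conjTranspose_eq_transpose_of_trivial] using hS⟩

section abs2
open Matrix
variable {α : Type*} [MeasurableSpace α] (μ : Measure α) [SigmaFinite μ] {n : ℕ}

set_option linter.unusedSectionVars false in
lemma gram_posSemidef (χ : Fin n → α → ℝ) (hi : ∀ a b, Integrable (fun x => χ a x * χ b x) μ)
    (M : Matrix (Fin n) (Fin n) ℝ) (hM : ∀ a b, M a b = ∫ x, χ a x * χ b x ∂μ) :
    M.PosSemidef := by
  refine PosSemidef.of_dotProduct_mulVec_nonneg ?_ ?_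
  · ext a b
    simp only [conjTranspose_apply, star_trivial, hM]
    simp only [mul_comm]
  · intro v
    have : star v ⬝ᵥ M *ᵥ v = ∫ x, (∑ a, v a * χ a x) ^ 2 ∂μ := by
      simp only [sq, Finset.sum_mul_sum]
      have hI : ∀ a b, Integrable (fun x => v a * χ a x * (v b * χ b x)) μ := fun a b =>
        ((hi a b).const_mul (v a * v b)).congr (Filter.Eventually.of_forall fun x => by ring)
      rw [integral_finsetSum _ fun a _ => integrable_finsetSum _ fun b _ => hI a b]
      simp only [dotProduct, mulVec, Finset.mul_sum]
      refine Finset.sum_congr rfl fun a _ => ?_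
      rw [integral_finsetSum _ fun b _ => hI a b]
      refine Finset.sum_congr rfl fun b _ => ?_
      rw [hM, Pi.star_apply, star_trivial, ← integral_mul_const, ← integral_const_mul]
      refine integral_congr_ae (Filter.Eventually.of_forall fun x => ?_)
      ring
    rw [this]
    exact integral_nonneg fun x => sq_nonneg _

lemma gram_orth (χ : Fin n → α → ℝ) (hi : ∀ a b, Integrable (fun x => χ a x * χ b x) μ)
    (M : Matrix (Fin n) (Fin n) ℝ) (hM : ∀ a b, M a b = ∫ x, χ a x * χ b x ∂μ)
    (hdet : IsUnit M.det) (h : α → α → ℝ) (hm : Measurable (Function.uncurry h))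
    (hb : ∀ x y, ‖h x y‖ ≤ 1) :
    ∑ i, ∑ j, (if i = j then 0 else
      ∫ X, h (X i) (X j) * (Matrix.det (Matrix.of fun a i => χ a (X i))) ^ 2
        ∂(Measure.pi fun _ : Fin n => μ))
      = (∫ X, (Matrix.det (Matrix.of fun a i => χ a (X i))) ^ 2 ∂(Measure.pi fun _ : Fin n => μ)) *
        ∫ z, h z.1 z.2 * (((fun a => χ a z.1) ⬝ᵥ M⁻¹ *ᵥ (fun a => χ a z.1)) *
            ((fun a => χ a z.2) ⬝ᵥ M⁻¹ *ᵥ (fun a => χ a z.2))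
          - ((fun a => χ a z.1) ⬝ᵥ M⁻¹ *ᵥ (fun a => χ a z.2)) ^ 2) ∂(μ.prod μ) := by
  obtain ⟨S, hS⟩ := psd_factor M (gram_posSemidef μ χ hi M hM)
  have hSd : IsUnit S.det := by
    rw [hS, det_mul] at hdet
    exact isUnit_of_mul_isUnit_right hdet
  set N : Matrix (Fin n) (Fin n) ℝ := (S⁻¹)ᵀ with hN
  have hNM : N * M * Nᵀ = 1 := by
    rw [hS, hN, transpose_transpose, transpose_nonsing_inv]
    rw [← Matrix.mul_assoc, Matrix.nonsing_inv_mul _ (by rwa [det_transpose]), Matrix.one_mul,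
      Matrix.mul_nonsing_inv _ hSd]
  have hNN : Nᵀ * N = M⁻¹ := by
    rw [hS, hN, transpose_transpose, Matrix.mul_inv_rev, transpose_nonsing_inv]
  have hq : ∀ u v : Fin n → ℝ, u ⬝ᵥ M⁻¹ *ᵥ v = ∑ a, (N *ᵥ u) a * (N *ᵥ v) a := by
    intro u v
    rw [← hNN, ← mulVec_mulVec, dotProduct_mulVec, vecMul_transpose]
    rfl
  set ψ : Fin n → α → ℝ := fun a x => (N *ᵥ (fun b => χ b x)) a with hψ
  have hexp : ∀ a b x, ψ a x * ψ b x = ∑ c, ∑ d, (N a c * N b d) * (χ c x * χ d x) := by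
    intro a b x
    simp only [hψ, mulVec, dotProduct, Finset.sum_mul_sum]
    refine Finset.sum_congr rfl fun c _ => Finset.sum_congr rfl fun d _ => ?_
    ring
  have hψi : ∀ a b, Integrable (fun x => ψ a x * ψ b x) μ := by
    intro a b
    simp_rw [hexp]
    exact integrable_finsetSum _ fun c _ => integrable_finsetSum _ fun d _ => (hi c d).const_mul _
  have hψo : ∀ a b, ∫ x, ψ a x * ψ b x ∂μ = if a = b then 1 else 0 := by
    intro a b
    simp_rw [hexp]
    rw [integral_finsetSum _ fun c _ => integrable_finsetSum _ fun d _ => (hi c d).const_mul _]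
    have : ∀ c, ∫ x, ∑ d, (N a c * N b d) * (χ c x * χ d x) ∂μ = ∑ d, N a c * M c d * N b d := by
      intro c
      rw [integral_finsetSum _ fun d _ => (hi c d).const_mul _]
      refine Finset.sum_congr rfl fun d _ => ?_
      rw [integral_const_mul, hM]
      ring
    simp_rw [this]
    rw [← Matrix.one_apply, ← hNM]
    simp only [Matrix.mul_apply, transpose_apply, Finset.sum_mul]
    exact Finset.sum_comm
  have hdetψ : ∀ X : Fin n → α, (Matrix.det (Matrix.of fun a i => ψ a (X i))) ^ 2 =
      N.det ^ 2 * (Matrix.det (Matrix.of fun a i => χ a (X i))) ^ 2 := by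
    intro X
    have : (Matrix.of fun a i => ψ a (X i)) = N * (Matrix.of fun a i => χ a (X i)) := by
      ext a i
      simp [hψ, Matrix.mul_apply, mulVec, dotProduct]
    rw [this, det_mul, mul_pow]
  have hNd : N.det ^ 2 ≠ 0 := by
    have := congrArg det hNM
    rw [det_mul, det_mul, det_one] at this
    intro hc
    have : N.det = 0 := by simpa using hc
    simp_all
  have e1 := integral_det_sq μ ψ hψi hψo
  have e2 := integral_det_pairs μ ψ hψi hψo h hm hb
  simp_rw [hdetψ] at e1 e2
  rw [integral_const_mul] at e1
  simp_rw [hq]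
  have hl : ∀ i j : Fin n, (if i = j then 0 else
      ∫ X, h (X i) (X j) * (N.det ^ 2 * (Matrix.det (Matrix.of fun a i => χ a (X i))) ^ 2)
        ∂(Measure.pi fun _ : Fin n => μ)) = N.det ^ 2 * (if i = j then 0 else
      ∫ X, h (X i) (X j) * (Matrix.det (Matrix.of fun a i => χ a (X i))) ^ 2
        ∂(Measure.pi fun _ : Fin n => μ)) := by
    intro i j
    split_ifs
    · simp
    · rw [← integral_const_mul]
      refine integral_congr_ae (Filter.Eventually.of_forall fun x => ?_)
      ring
  simp_rw [hl, ← Finset.mul_sum] at e2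
  rw [← e1, mul_assoc] at e2
  have e3 := mul_left_cancel₀ hNd e2
  rw [e3]
  simp only [hψ, sq]

lemma quad_le (A : Matrix (Fin n) (Fin n) ℝ) (v : Fin n → ℝ) :
    v ⬝ᵥ A *ᵥ v ≤ ‖Matrix.toEuclideanCLM (𝕜 := ℝ) A‖ * ∑ a, v a ^ 2 := by
  set w : EuclideanSpace ℝ (Fin n) := WithLp.toLp 2 v
  have h1 : v ⬝ᵥ A *ᵥ v = inner ℝ w (Matrix.toEuclideanCLM (𝕜 := ℝ) A w) := by
    simp [w, PiLp.inner_apply, dotProduct, mul_comm]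
  have h2 : ∑ a, v a ^ 2 = ‖w‖ ^ 2 := by
    simp [w, EuclideanSpace.norm_sq_eq]
  rw [h1, h2]
  calc _ ≤ ‖w‖ * ‖Matrix.toEuclideanCLM (𝕜 := ℝ) A w‖ := real_inner_le_norm _ _
    _ ≤ ‖w‖ * (‖Matrix.toEuclideanCLM (𝕜 := ℝ) A‖ * ‖w‖) := by
      gcongr; exact ContinuousLinearMap.le_opNorm _ _
    _ = _ := by ring

lemma gram_bound (A : Matrix (Fin n) (Fin n) ℝ) (hA : A.PosSemidef) (u v : Fin n → ℝ) :
    (u ⬝ᵥ A *ᵥ u) * (v ⬝ᵥ A *ᵥ v) - (u ⬝ᵥ A *ᵥ v) ^ 2 ≤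
      ‖Matrix.toEuclideanCLM (𝕜 := ℝ) A‖ ^ 2 * (∑ a, u a ^ 2) * ∑ a, (v a - u a) ^ 2 := by
  have hs : v ⬝ᵥ A *ᵥ u = u ⬝ᵥ A *ᵥ v := by
    have hT : Aᵀ = A := by
      have := hA.1
      rwa [IsHermitian, conjTranspose_eq_transpose_of_trivial] at this
    rw [dotProduct_mulVec, ← mulVec_transpose, hT, dotProduct_comm]
  have e : (u ⬝ᵥ A *ᵥ u) * (v ⬝ᵥ A *ᵥ v) - (u ⬝ᵥ A *ᵥ v) ^ 2 =
     (u ⬝ᵥ A *ᵥ u) * ((v - u) ⬝ᵥ A *ᵥ (v - u)) - (u ⬝ᵥ A *ᵥ (v - u)) ^ 2 := by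
    simp only [mulVec_sub, dotProduct_sub, sub_dotProduct, hs]
    ring
  have p1 : 0 ≤ u ⬝ᵥ A *ᵥ u := by simpa using hA.dotProduct_mulVec_nonneg u
  have p2 : 0 ≤ (v - u) ⬝ᵥ A *ᵥ (v - u) := by simpa using hA.dotProduct_mulVec_nonneg (v - u)
  have q1 := quad_le A u
  have q2 := quad_le A (v - u)
  calc _ ≤ (u ⬝ᵥ A *ᵥ u) * ((v - u) ⬝ᵥ A *ᵥ (v - u)) := by
        rw [e]; nlinarith [sq_nonneg (u ⬝ᵥ A *ᵥ (v - u))]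
    _ ≤ (‖Matrix.toEuclideanCLM (𝕜 := ℝ) A‖ * ∑ a, u a ^ 2) *
        (‖Matrix.toEuclideanCLM (𝕜 := ℝ) A‖ * ∑ a, (v - u) a ^ 2) :=
        mul_le_mul q1 q2 p2 (p1.trans q1)
    _ = _ := by simp only [Pi.sub_apply]; ring

end abs2

lemma momentum_bound {n : ℕ} (hn : 1 ≤ n) (p : Fin n → (Fin 3 → ℕ))
    (hp : ∀ i, ∀ m' : Fin 3 → ℕ, (∀ a, 1 ≤ m' a) → (∀ j, p j ≠ m') →
            (∑ a, (p i a) ^ 2) ≤ ∑ a, (m' a) ^ 2) (i : Fin n) :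
    (∑ a, (p i a : ℝ) ^ 2) ≤ 12 * (n : ℝ) ^ ((2:ℝ)/3) := by
  set r : ℝ := (n : ℝ) ^ ((1:ℝ)/3) with hr
  have hn1 : (1:ℝ) ≤ n := by exact_mod_cast hn
  have hr1 : 1 ≤ r := Real.one_le_rpow hn1 (by norm_num)
  have hr3 : r ^ 3 = n := by
    rw [hr, ← Real.rpow_natCast, ← Real.rpow_mul (by positivity)]; norm_num
  have hr2 : r ^ 2 = (n : ℝ) ^ ((2:ℝ)/3) := by
    rw [hr, ← Real.rpow_natCast, ← Real.rpow_mul (by positivity)]; norm_num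
  set k : ℕ := ⌊r⌋₊ + 1 with hk
  have hk1 : r < k := by rw [hk]; push_cast; exact Nat.lt_floor_add_one r
  have hk2 : (k : ℝ) ≤ r + 1 := by
    rw [hk]; push_cast
    have := Nat.floor_le (zero_le_one.trans hr1)
    linarith
  have hkn : n < k ^ 3 := by
    have : (n : ℝ) < (k : ℝ) ^ 3 := by rw [← hr3]; gcongr
    exact_mod_cast this
  obtain ⟨c, hc⟩ : ∃ c : Fin 3 → Fin k, ∀ j, p j ≠ fun a => (c a : ℕ) + 1 := by
    by_contra hcon
    push Not at hcon
    choose F hF using hcon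
    have hinj : Function.Injective F := by
      intro c c' h
      have := (hF c).symm.trans ((congrArg p h).trans (hF c'))
      funext a
      have := congrFun this a
      ext
      simpa using this
    have := Fintype.card_le_of_injective F hinj
    simp at this
    omega
  have h1 := hp i (fun a => (c a : ℕ) + 1) (by simp) hc
  have h2 : ∑ a : Fin 3, ((c a : ℕ) + 1) ^ 2 ≤ ∑ _a : Fin 3, k ^ 2 := by
    gcongr with a
    have := (c a).2
    omega
  have h3 : ((∑ a, (p i a) ^ 2 : ℕ) : ℝ) ≤ ((∑ _a : Fin 3, k ^ 2 : ℕ) : ℝ) := by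
    exact_mod_cast h1.trans h2
  push_cast at h3
  simp only [Finset.sum_const, Finset.card_univ, Fintype.card_fin, nsmul_eq_mul] at h3
  rw [← hr2]
  push_cast at h3
  nlinarith

/-- the cube -/
def cubeQ (ℓ : ℝ) : Set E3 := {x : E3 | ∀ a, 0 ≤ x a ∧ x a ≤ ℓ}

lemma cubeQ_eq (ℓ : ℝ) : cubeQ ℓ = (MeasurableEquiv.toLp 2 (Fin 3 → ℝ)).symm ⁻¹'
    (Set.univ.pi fun _ => Set.Icc 0 ℓ) := by
  ext x; simp [cubeQ, -Set.pi_univ_Icc]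

lemma cubeQ_meas (ℓ : ℝ) : MeasurableSet (cubeQ ℓ) := by
  rw [cubeQ_eq]
  exact (MeasurableEquiv.measurable _) (MeasurableSet.univ_pi fun _ => measurableSet_Icc)

lemma cubeQ_vol (ℓ : ℝ) : volume (cubeQ ℓ) = ENNReal.ofReal ℓ ^ 3 := by
  rw [cubeQ_eq, (EuclideanSpace.volume_preserving_symm_measurableEquiv_toLp (Fin 3)).measure_preimage_equiv]
  rw [volume_pi_pi]
  simp

lemma eig_of_mem {ℓ : ℝ} {x : E3} (hx : x ∈ cubeQ ℓ) (m : Fin 3 → ℕ) : dirichletEig ℓ m x =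
    (2 / ℓ) ^ ((3:ℝ)/2) * ∏ a : Fin 3, Real.sin (π * (m a : ℝ) / ℓ * x a) :=
  Set.indicator_of_mem (s := cubeQ ℓ) hx _

lemma eig_of_notMem {ℓ : ℝ} {x : E3} (hx : x ∉ cubeQ ℓ) (m : Fin 3 → ℕ) : dirichletEig ℓ m x = 0 :=
  Set.indicator_of_notMem (s := cubeQ ℓ) hx _

lemma eig_meas (ℓ : ℝ) (m : Fin 3 → ℕ) : Measurable (dirichletEig ℓ m) := by
  refine Measurable.indicator (s := cubeQ ℓ) ?_ (cubeQ_meas ℓ)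
  fun_prop

lemma pref_sq {ℓ : ℝ} (hℓ : 0 < ℓ) : ((2 / ℓ) ^ ((3:ℝ)/2)) ^ 2 = 8 / ℓ ^ 3 := by
  rw [← Real.rpow_natCast, ← Real.rpow_mul (by positivity)]
  norm_num
  rw [div_pow]
  norm_num

lemma eig_sq_le {ℓ : ℝ} (hℓ : 0 < ℓ) (m : Fin 3 → ℕ) (x : E3) :
    dirichletEig ℓ m x ^ 2 ≤ 8 / ℓ ^ 3 := by
  by_cases hx : x ∈ cubeQ ℓ
  · rw [eig_of_mem hx, mul_pow, pref_sq hℓ, ← Finset.prod_pow]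
    refine mul_le_of_le_one_right (by positivity) ?_
    exact Finset.prod_le_one (fun _ _ => sq_nonneg _) fun _ _ => Real.sin_sq_le_one _
  · rw [eig_of_notMem hx, zero_pow two_ne_zero]; positivity

lemma sin_diff (a b : ℝ) : |Real.sin a - Real.sin b| ≤ |a - b| := by
  simpa [Real.dist_eq] using Real.lipschitzWith_sin.dist_le_mul a b

lemma prod3_diff (a b c a' b' c' : ℝ) (ha' : |a'| ≤ 1) (hb : |b| ≤ 1) (hb' : |b'| ≤ 1) (hc : |c| ≤ 1) :
    |a * b * c - a' * b' * c'| ≤ |a - a'| + |b - b'| + |c - c'| := by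
  have e : a * b * c - a' * b' * c' = (a - a') * (b * c) + (b - b') * (a' * c) + (c - c') * (a' * b') := by
    ring
  rw [e]
  refine (abs_add_three _ _ _).trans ?_
  simp only [abs_mul]
  have h1 : |b| * |c| ≤ 1 := mul_le_one₀ hb (abs_nonneg _) hc
  have h2 : |a'| * |c| ≤ 1 := mul_le_one₀ ha' (abs_nonneg _) hc
  have h3 : |a'| * |b'| ≤ 1 := mul_le_one₀ ha' (abs_nonneg _) hb'
  have := mul_le_of_le_one_right (abs_nonneg (a - a')) h1
  have := mul_le_of_le_one_right (abs_nonneg (b - b')) h2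
  have := mul_le_of_le_one_right (abs_nonneg (c - c')) h3
  linarith

lemma eig_diff {ℓ : ℝ} (hℓ : 0 < ℓ) (m : Fin 3 → ℕ) {x y : E3} (hx : x ∈ cubeQ ℓ) (hy : y ∈ cubeQ ℓ) :
    (dirichletEig ℓ m y - dirichletEig ℓ m x) ^ 2 ≤
      8 / ℓ ^ 3 * ((π / ℓ) ^ 2 * (∑ a, (m a : ℝ) ^ 2) * ‖x - y‖ ^ 2) := by
  rw [eig_of_mem hx, eig_of_mem hy, ← mul_sub, mul_pow, pref_sq hℓ]
  refine mul_le_mul_of_nonneg_left ?_ (by positivity)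
  have h1 : |∏ a : Fin 3, Real.sin (π * (m a : ℝ) / ℓ * y a) - ∏ a : Fin 3, Real.sin (π * (m a : ℝ) / ℓ * x a)|
      ≤ ∑ a : Fin 3, ((m a : ℝ)) * (π / ℓ * |x a - y a|) := by
    simp only [Fin.prod_univ_three, Fin.sum_univ_three]
    refine (prod3_diff _ _ _ _ _ _ (Real.abs_sin_le_one _) (Real.abs_sin_le_one _) (Real.abs_sin_le_one _)
      (Real.abs_sin_le_one _)).trans ?_
    have : ∀ a : Fin 3, |Real.sin (π * (m a : ℝ) / ℓ * y a) - Real.sin (π * (m a : ℝ) / ℓ * x a)| ≤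
        ((m a : ℝ)) * (π / ℓ * |x a - y a|) := by
      intro a
      refine (sin_diff _ _).trans (le_of_eq ?_)
      rw [← mul_sub, abs_mul, abs_of_nonneg (by positivity), abs_sub_comm]
      ring
    gcongr <;> exact this _
  calc _ ≤ (∑ a : Fin 3, ((m a : ℝ)) * (π / ℓ * |x a - y a|)) ^ 2 := by
        rw [← sq_abs]; gcongr
    _ ≤ (∑ a, (m a : ℝ) ^ 2) * ∑ a, (π / ℓ * |x a - y a|) ^ 2 := Finset.sum_mul_sq_le_sq_mul_sq _ _ _
    _ = _ := by
        rw [EuclideanSpace.norm_sq_eq]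
        simp only [mul_pow, ← Finset.mul_sum, sq_abs, PiLp.sub_apply, Real.norm_eq_abs]
        ring

/-- the pair set -/
def pairSet (ℓ s : ℝ) : Set (E3 × E3) := {z | z.1 ∈ cubeQ ℓ ∧ ‖z.1 - z.2‖ < 2 * s}

lemma pairSet_meas (ℓ s : ℝ) : MeasurableSet (pairSet ℓ s) :=
  (measurable_fst (cubeQ_meas ℓ)).inter
    (measurableSet_lt (measurable_fst.sub measurable_snd).norm measurable_const)

lemma pairSet_vol {ℓ s : ℝ} (hℓ : 0 < ℓ) (hs : 0 < s) :
    ((volume : Measure E3).prod volume) (pairSet ℓ s) =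
      ENNReal.ofReal (ℓ ^ 3 * ((2 * s) ^ 3 * (π * 4 / 3))) := by
  rw [Measure.prod_apply (pairSet_meas ℓ s)]
  have : ∀ x : E3, volume (Prod.mk x ⁻¹' pairSet ℓ s) = 
      (cubeQ ℓ).indicator (fun _ => ENNReal.ofReal ((2 * s) ^ 3 * (π * 4 / 3))) x := by
    intro x
    by_cases hx : x ∈ cubeQ ℓ
    · rw [Set.indicator_of_mem hx]
      have : Prod.mk x ⁻¹' pairSet ℓ s = Metric.ball x (2 * s) := by
        ext y
        simp [pairSet, hx, dist_eq_norm, norm_sub_rev]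
      rw [this, EuclideanSpace.volume_ball_fin_three, ← ENNReal.ofReal_pow (by positivity),
        ← ENNReal.ofReal_mul (by positivity)]
    · rw [Set.indicator_of_notMem hx]
      have : Prod.mk x ⁻¹' pairSet ℓ s = ∅ := by
        ext y
        simp [pairSet, hx]
      simp [this]
  simp_rw [this]
  rw [lintegral_indicator_const (cubeQ_meas ℓ), cubeQ_vol, ← ENNReal.ofReal_pow hℓ.le,
    ← ENNReal.ofReal_mul (by positivity), mul_comm]

lemma chi_int {ℓ : ℝ} (hℓ : 0 < ℓ) (m m' : Fin 3 → ℕ) (w : E3 → ℝ) (hw : Measurable w)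
    (hw1 : ∀ x, 0 ≤ w x ∧ w x ≤ 1) :
    Integrable (fun x => (w x * dirichletEig ℓ m x) * (w x * dirichletEig ℓ m' x)) := by
  have hI : Integrable ((cubeQ ℓ).indicator (fun _ : E3 => (8 / ℓ ^ 3 : ℝ))) := by
    rw [integrable_indicator_iff (cubeQ_meas ℓ)]
    refine integrableOn_const ?_
    rw [cubeQ_vol]
    simp
  refine hI.mono' ?_ (Filter.Eventually.of_forall fun x => ?_)
  · exact ((hw.mul (eig_meas ℓ m)).mul (hw.mul (eig_meas ℓ m'))).aestronglyMeasurable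
  · by_cases hx : x ∈ cubeQ ℓ
    · rw [Set.indicator_of_mem hx]
      have h1 := eig_sq_le hℓ m x
      have h2 := eig_sq_le hℓ m' x
      have h3 : |dirichletEig ℓ m x * dirichletEig ℓ m' x| ≤ 8 / ℓ ^ 3 := by
        rw [abs_le]
        constructor <;> nlinarith [sq_nonneg (dirichletEig ℓ m x - dirichletEig ℓ m' x),
          sq_nonneg (dirichletEig ℓ m x + dirichletEig ℓ m' x)]
      have e : (w x * dirichletEig ℓ m x) * (w x * dirichletEig ℓ m' x) =
        (w x * w x) * (dirichletEig ℓ m x * dirichletEig ℓ m' x) := by ring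
      rw [e, Real.norm_eq_abs, abs_mul, abs_of_nonneg (mul_self_nonneg _)]
      exact (mul_le_of_le_one_left (abs_nonneg _) (mul_le_one₀ (hw1 x).2 (hw1 x).1 (hw1 x).2)).trans h3
    · rw [Set.indicator_of_notMem hx, eig_of_notMem hx]
      simp

section final
open Matrix

lemma gram_point {ℓ : ℝ} (hℓ : 0 < ℓ) {n : ℕ} (hn : 1 ≤ n) (s : ℝ) (p : Fin n → (Fin 3 → ℕ))
    (hp : ∀ i, ∀ m' : Fin 3 → ℕ, (∀ a, 1 ≤ m' a) → (∀ j, p j ≠ m') →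
            (∑ a, (p i a) ^ 2) ≤ ∑ a, (m' a) ^ 2)
    (w : E3 → ℝ) (hw1 : ∀ x, 0 ≤ w x ∧ w x ≤ 1)
    (A : Matrix (Fin n) (Fin n) ℝ) (hA : A.PosSemidef) (z : E3 × E3) :
    (if ‖z.1 - z.2‖ < 2 * s then (1:ℝ) else 0) *
      (((fun a => w z.1 * dirichletEig ℓ (p a) z.1) ⬝ᵥ A *ᵥ (fun a => w z.1 * dirichletEig ℓ (p a) z.1)) *
            ((fun a => w z.2 * dirichletEig ℓ (p a) z.2) ⬝ᵥ A *ᵥ (fun a => w z.2 * dirichletEig ℓ (p a) z.2))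
          - ((fun a => w z.1 * dirichletEig ℓ (p a) z.1) ⬝ᵥ A *ᵥ (fun a => w z.2 * dirichletEig ℓ (p a) z.2)) ^ 2)
    ≤ (pairSet ℓ s).indicator (fun _ => matOpNormR A ^ 2 * (n * (8 / ℓ ^ 3)) *
        (n * (8 / ℓ ^ 3 * ((π / ℓ) ^ 2 * (12 * (n : ℝ) ^ ((2:ℝ)/3)) * (2 * s) ^ 2)))) z := by
  obtain ⟨x, y⟩ := z
  simp only
  by_cases hs : ‖x - y‖ < 2 * s
  swap
  · rw [if_neg hs, Set.indicator_of_notMem (fun h => hs h.2), zero_mul]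
  rw [if_pos hs, one_mul]
  by_cases hx : x ∈ cubeQ ℓ
  swap
  · rw [Set.indicator_of_notMem (fun h => hx h.1)]
    have : (fun a => w x * dirichletEig ℓ (p a) x) = 0 := by
      funext a; simp [eig_of_notMem hx]
    simp [this]
  rw [Set.indicator_of_mem (show (x, y) ∈ pairSet ℓ s from ⟨hx, hs⟩)]
  by_cases hy : y ∈ cubeQ ℓ
  swap
  · have : (fun a => w y * dirichletEig ℓ (p a) y) = 0 := by
      funext a; simp [eig_of_notMem hy]
    simp only [this, mulVec_zero, dotProduct_zero, mul_zero, zero_pow two_ne_zero, sub_zero]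
    positivity
  set u : Fin n → ℝ := fun a => dirichletEig ℓ (p a) x with hu
  set v : Fin n → ℝ := fun a => dirichletEig ℓ (p a) y with hv
  have e1 : (fun a => w x * dirichletEig ℓ (p a) x) = w x • u := rfl
  have e2 : (fun a => w y * dirichletEig ℓ (p a) y) = w y • v := rfl
  have hg := gram_bound A hA u v
  have hU : ∑ a, u a ^ 2 ≤ n * (8 / ℓ ^ 3) := by
    refine (Finset.sum_le_sum fun a _ => eig_sq_le hℓ (p a) x).trans ?_
    simp
  have hV : ∑ a, (v a - u a) ^ 2 ≤
      n * (8 / ℓ ^ 3 * ((π / ℓ) ^ 2 * (12 * (n : ℝ) ^ ((2:ℝ)/3)) * (2 * s) ^ 2)) := by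
    have : ∀ a ∈ Finset.univ, (v a - u a) ^ 2 ≤
        8 / ℓ ^ 3 * ((π / ℓ) ^ 2 * (12 * (n : ℝ) ^ ((2:ℝ)/3)) * (2 * s) ^ 2) := by
      intro a _
      refine (eig_diff hℓ (p a) hx hy).trans ?_
      have := momentum_bound hn p hp a
      gcongr
    refine (Finset.sum_le_sum this).trans ?_
    simp
  have hR : (u ⬝ᵥ A *ᵥ u) * (v ⬝ᵥ A *ᵥ v) - (u ⬝ᵥ A *ᵥ v) ^ 2 ≤ matOpNormR A ^ 2 * (n * (8 / ℓ ^ 3)) *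
        (n * (8 / ℓ ^ 3 * ((π / ℓ) ^ 2 * (12 * (n : ℝ) ^ ((2:ℝ)/3)) * (2 * s) ^ 2))) := by
    refine hg.trans ?_
    unfold matOpNormR
    gcongr
  have hR0 : 0 ≤ matOpNormR A ^ 2 * (n * (8 / ℓ ^ 3)) *
        (n * (8 / ℓ ^ 3 * ((π / ℓ) ^ 2 * (12 * (n : ℝ) ^ ((2:ℝ)/3)) * (2 * s) ^ 2))) := by positivity
  have e3 : ((w x • u) ⬝ᵥ A *ᵥ (w x • u)) * ((w y • v) ⬝ᵥ A *ᵥ (w y • v)) - ((w x • u) ⬝ᵥ A *ᵥ (w y • v)) ^ 2 =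
      (w x ^ 2 * w y ^ 2) * ((u ⬝ᵥ A *ᵥ u) * (v ⬝ᵥ A *ᵥ v) - (u ⬝ᵥ A *ᵥ v) ^ 2) := by
    simp only [mulVec_smul, dotProduct_smul, smul_dotProduct, smul_eq_mul]
    ring
  rw [e1, e2, e3]
  have hwx := hw1 x
  have hwy := hw1 y
  have hww : w x ^ 2 * w y ^ 2 ≤ 1 :=
    mul_le_one₀ (pow_le_one₀ hwx.1 hwx.2) (by positivity) (pow_le_one₀ hwy.1 hwy.2)
  exact (mul_le_mul_of_nonneg_left hR (by positivity)).trans (mul_le_of_le_one_left hR0 hww)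

lemma gram_integral {ℓ : ℝ} (hℓ : 0 < ℓ) {n : ℕ} (hn : 1 ≤ n) (s : ℝ) (hs : 0 < s) (p : Fin n → (Fin 3 → ℕ))
    (hp : ∀ i, ∀ m' : Fin 3 → ℕ, (∀ a, 1 ≤ m' a) → (∀ j, p j ≠ m') →
            (∑ a, (p i a) ^ 2) ≤ ∑ a, (m' a) ^ 2)
    (w : E3 → ℝ) (hw1 : ∀ x, 0 ≤ w x ∧ w x ≤ 1)
    (A : Matrix (Fin n) (Fin n) ℝ) (hA : A.PosSemidef) :
    ∫ z : E3 × E3, (if ‖z.1 - z.2‖ < 2 * s then (1:ℝ) else 0) *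
      (((fun a => w z.1 * dirichletEig ℓ (p a) z.1) ⬝ᵥ A *ᵥ (fun a => w z.1 * dirichletEig ℓ (p a) z.1)) *
            ((fun a => w z.2 * dirichletEig ℓ (p a) z.2) ⬝ᵥ A *ᵥ (fun a => w z.2 * dirichletEig ℓ (p a) z.2))
          - ((fun a => w z.1 * dirichletEig ℓ (p a) z.1) ⬝ᵥ A *ᵥ (fun a => w z.2 * dirichletEig ℓ (p a) z.2)) ^ 2)
        ∂((volume : Measure E3).prod volume)
    ≤ (32768 * π ^ 3) * (n : ℝ) ^ ((8:ℝ)/3) * (matOpNormR A) ^ 2 * (s / ℓ) ^ 5 := by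
  have hn0 : (0:ℝ) < n := by exact_mod_cast hn
  by_cases hIntg : Integrable (fun z : E3 × E3 => (if ‖z.1 - z.2‖ < 2 * s then (1:ℝ) else 0) *
      (((fun a => w z.1 * dirichletEig ℓ (p a) z.1) ⬝ᵥ A *ᵥ (fun a => w z.1 * dirichletEig ℓ (p a) z.1)) *
            ((fun a => w z.2 * dirichletEig ℓ (p a) z.2) ⬝ᵥ A *ᵥ (fun a => w z.2 * dirichletEig ℓ (p a) z.2))
          - ((fun a => w z.1 * dirichletEig ℓ (p a) z.1) ⬝ᵥ A *ᵥ (fun a => w z.2 * dirichletEig ℓ (p a) z.2)) ^ 2))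
        ((volume : Measure E3).prod volume)
  swap
  · rw [integral_undef hIntg]
    positivity
  refine (integral_mono hIntg ?_ (gram_point hℓ hn s p hp w hw1 A hA)).trans (le_of_eq ?_)
  · rw [integrable_indicator_iff (pairSet_meas ℓ s)]
    refine integrableOn_const ?_
    rw [pairSet_vol hℓ hs]
    exact ENNReal.ofReal_ne_top
  · rw [integral_indicator_const _ (pairSet_meas ℓ s), Measure.real, pairSet_vol hℓ hs,
      ENNReal.toReal_ofReal (by positivity), smul_eq_mul]
    have : (n : ℝ) ^ ((8:ℝ)/3) = n ^ 2 * (n : ℝ) ^ ((2:ℝ)/3) := by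
      rw [← Real.rpow_natCast, ← Real.rpow_add hn0]; norm_num
    rw [this]
    field_simp
    ring

lemma slater_eq {n : ℕ} (φ : Fin n → E3 → ℝ) (m : ℕ) (y : Fin m → E3) (f : E3 → ℝ) (X : Fin n → E3) :
    (slaterDR φ X) ^ 2 * (∏ i, ∏ j, f (X i - y j)) ^ 2 =
      ((Nat.factorial n : ℝ) ^ (-(1:ℝ)/2)) ^ 2 *
        (Matrix.det (Matrix.of fun a i => (∏ k, f (X i - y k)) * φ a (X i))) ^ 2 := by
  have := Matrix.det_mul_row (fun i => ∏ k, f (X i - y k)) (Matrix.of fun a i => φ a (X i))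
  simp only [Matrix.of_apply] at this
  rw [this, slaterDR]
  ring

lemma G_lower {n : ℕ} (g : E3 → ℝ) (s : ℝ) (hg1 : ∀ x : E3, 2 * s ≤ ‖x‖ → g x = 1) (X : Fin n → E3) :
    1 - ∑ i, ∑ j, (if i = j then 0 else (if ‖X i - X j‖ < 2 * s then (1:ℝ) else 0)) ≤
      (∏ i : Fin n, ∏ j : Fin n, if i < j then g (X i - X j) else 1) ^ 2 := by
  have h0 : ∀ i j : Fin n, 0 ≤ (if i = j then 0 else (if ‖X i - X j‖ < 2 * s then (1:ℝ) else 0)) := by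
    intro i j; split_ifs <;> norm_num
  by_cases h : ∃ i j : Fin n, i ≠ j ∧ ‖X i - X j‖ < 2 * s
  · obtain ⟨i, j, hij, hlt⟩ := h
    have h1 : (1:ℝ) ≤ ∑ i, ∑ j, (if i = j then 0 else (if ‖X i - X j‖ < 2 * s then (1:ℝ) else 0)) := by
      calc (1:ℝ) = (if i = j then 0 else (if ‖X i - X j‖ < 2 * s then (1:ℝ) else 0)) := by
            rw [if_neg hij, if_pos hlt]
        _ ≤ ∑ j, (if i = j then 0 else (if ‖X i - X j‖ < 2 * s then (1:ℝ) else 0)) :=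
            Finset.single_le_sum (f := fun j => (if i = j then 0 else (if ‖X i - X j‖ < 2 * s then (1:ℝ) else 0)))
              (fun j _ => h0 i j) (Finset.mem_univ j)
        _ ≤ _ := Finset.single_le_sum (f := fun i => ∑ j, (if i = j then 0 else (if ‖X i - X j‖ < 2 * s then (1:ℝ) else 0)))
              (fun i _ => Finset.sum_nonneg fun j _ => h0 i j) (Finset.mem_univ i)
    nlinarith [sq_nonneg (∏ i : Fin n, ∏ j : Fin n, if i < j then g (X i - X j) else 1)]
  · push Not at h
    have : (∏ i : Fin n, ∏ j : Fin n, if i < j then g (X i - X j) else 1) = 1 := by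
      refine Finset.prod_eq_one fun i _ => Finset.prod_eq_one fun j _ => ?_
      split_ifs with hij
      · exact hg1 _ (h i j hij.ne)
      · rfl
    rw [this]
    have := Finset.sum_nonneg (fun i (_ : i ∈ Finset.univ) => Finset.sum_nonneg fun j (_ : j ∈ Finset.univ) => h0 i j)
    linarith

end final

theorem jastrow_norm_comparison :
    ∃ C : ℝ, 0 < C ∧
      ∀ (ℓ : ℝ) (n m : ℕ) (s : ℝ),
        0 < ℓ → 1 ≤ n → 1 ≤ m → 0 < s →
        ∀ p : Fin n → (Fin 3 → ℕ),
          Function.Injective p →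
          (∀ i a, 1 ≤ p i a) →
          (∀ i, ∀ m' : Fin 3 → ℕ, (∀ a, 1 ≤ m' a) → (∀ j, p j ≠ m') →
            (∑ a, (p i a) ^ 2) ≤ ∑ a, (m' a) ^ 2) →
        ∀ y : Fin m → E3,
        ∀ f : E3 → ℝ, Measurable f → (∀ x, 0 ≤ f x ∧ f x ≤ 1) →
        ∀ M : Matrix (Fin n) (Fin n) ℝ,
          (∀ i j, M i j = ∫ x : E3, dirichletEig ℓ (p i) x * dirichletEig ℓ (p j) x *
              ∏ k : Fin m, f (x - y k) ^ 2) →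
          IsUnit M.det →
        ∀ g : E3 → ℝ, Measurable g → (∀ x, 0 ≤ g x ∧ g x ≤ 1) →
          (∀ x : E3, 2 * s ≤ ‖x‖ → g x = 1) →
          (1 - C * (n : ℝ) ^ ((8:ℝ)/3) * (matOpNormR M⁻¹) ^ 2 * (s / ℓ) ^ 5) *
              (∫ X : Fin n → E3, (slaterDR (fun i => dirichletEig ℓ (p i)) X) ^ 2 *
                (∏ i, ∏ j, f (X i - y j)) ^ 2)
            ≤ ∫ X : Fin n → E3, (slaterDR (fun i => dirichletEig ℓ (p i)) X) ^ 2 *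
                (∏ i, ∏ j, f (X i - y j)) ^ 2 *
                (∏ i : Fin n, ∏ j : Fin n, if i < j then g (X i - X j) else 1) ^ 2 := by
  refine ⟨32768 * π ^ 3, by positivity, ?_⟩
  intro ℓ n m s hℓ hn _ hs p _ _ hp y f hf hf1 M hM hdet g hg hg01 hg1
  set w : E3 → ℝ := fun x => ∏ k, f (x - y k) with hw
  have hwm : Measurable w := Finset.measurable_fun_prod _ fun k _ => hf.comp (measurable_id.sub_const _)
  have hw1 : ∀ x, 0 ≤ w x ∧ w x ≤ 1 := fun x =>
    ⟨Finset.prod_nonneg fun k _ => (hf1 _).1,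
      Finset.prod_le_one (fun k _ => (hf1 _).1) fun k _ => (hf1 _).2⟩
  set χ : Fin n → E3 → ℝ := fun a x => w x * dirichletEig ℓ (p a) x with hχ
  have hi : ∀ a b, Integrable (fun x => χ a x * χ b x) := fun a b =>
    chi_int hℓ (p a) (p b) w hwm hw1
  have hMχ : ∀ a b, M a b = ∫ x, χ a x * χ b x := by
    intro a b
    rw [hM]
    refine integral_congr_ae (Filter.Eventually.of_forall fun x => ?_)
    simp only [hχ, hw, Finset.prod_pow]
    ring
  set h : E3 → E3 → ℝ := fun x y => if ‖x - y‖ < 2 * s then 1 else 0 with hh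
  have hm : Measurable (Function.uncurry h) :=
    Measurable.ite (measurableSet_lt (measurable_fst.sub measurable_snd).norm measurable_const)
      measurable_const measurable_const
  have hb : ∀ x y, ‖h x y‖ ≤ 1 := by
    intro x y
    simp only [hh]
    split_ifs <;> simp
  have hpsd := gram_posSemidef volume χ hi M hMχ
  have key := gram_orth volume χ hi M hMχ hdet h hm hb
  have hε := gram_integral hℓ hn s hs p hp w hw1 M⁻¹ hpsd.inv
  set ε := (32768 * π ^ 3) * (n : ℝ) ^ ((8:ℝ)/3) * (matOpNormR M⁻¹) ^ 2 * (s / ℓ) ^ 5 with hεd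
  set c : ℝ := ((Nat.factorial n : ℝ) ^ (-(1:ℝ)/2)) ^ 2 with hc
  have hc0 : 0 ≤ c := sq_nonneg _
  set D : (Fin n → E3) → ℝ := fun X => (Matrix.det (Matrix.of fun a i => χ a (X i))) ^ 2 with hD
  have hD0 : ∀ X, 0 ≤ D X := fun X => sq_nonneg _
  have hDi : Integrable D volume := int_det_sq volume χ hi
  have hsl : ∀ X : Fin n → E3, (slaterDR (fun i => dirichletEig ℓ (p i)) X) ^ 2 *
                (∏ i, ∏ j, f (X i - y j)) ^ 2 = c * D X := fun X =>
    slater_eq (fun i => dirichletEig ℓ (p i)) m y f X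
  simp_rw [hsl, mul_assoc c]
  rw [integral_const_mul, integral_const_mul, mul_left_comm]
  refine mul_le_mul_of_nonneg_left ?_ hc0
  set G : (Fin n → E3) → ℝ := fun X => (∏ i : Fin n, ∏ j : Fin n, if i < j then g (X i - X j) else 1) with hG
  have hGm : Measurable G := by
    refine Finset.measurable_fun_prod _ fun i _ => Finset.measurable_fun_prod _ fun j _ => ?_
    by_cases hij : i < j
    · simp only [if_pos hij]
      exact hg.comp ((measurable_pi_apply i).sub (measurable_pi_apply j))
    · simp only [if_neg hij]
      exact measurable_const
  have hG01 : ∀ X, 0 ≤ G X ∧ G X ≤ 1 := by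
    intro X
    have : ∀ i j : Fin n, 0 ≤ (if i < j then g (X i - X j) else 1) ∧ (if i < j then g (X i - X j) else 1) ≤ 1 := by
      intro i j
      split_ifs
      · exact hg01 _
      · norm_num
    exact ⟨Finset.prod_nonneg fun i _ => Finset.prod_nonneg fun j _ => (this i j).1,
      Finset.prod_le_one (fun i _ => Finset.prod_nonneg fun j _ => (this i j).1)
        fun i _ => Finset.prod_le_one (fun j _ => (this i j).1) fun j _ => (this i j).2⟩
  have hDG : Integrable (fun X => D X * G X ^ 2) volume := by
    refine (hDi.bdd_mul (c := 1) (hGm.pow_const 2).aestronglyMeasurable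
      (Filter.Eventually.of_forall fun X => ?_)).congr (Filter.Eventually.of_forall fun X => mul_comm _ _)
    rw [Real.norm_eq_abs, abs_of_nonneg (sq_nonneg _)]
    exact pow_le_one₀ (hG01 X).1 (hG01 X).2
  have hhD : ∀ i j : Fin n, Integrable (fun X : Fin n → E3 => if i = j then 0 else h (X i) (X j) * D X) volume := by
    intro i j
    by_cases hij : i = j
    · simp [hij]
    · simp only [if_neg hij]
      have hmX : Measurable (fun X : Fin n → E3 => h (X i) (X j)) :=
        show Measurable (Function.uncurry h ∘ fun X : Fin n → E3 => (X i, X j)) from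
          hm.comp ((measurable_pi_apply i).prodMk (measurable_pi_apply j))
      exact hDi.bdd_mul (c := 1) hmX.aestronglyMeasurable (Filter.Eventually.of_forall fun X => hb _ _)
  have hlow : ∫ X, (D X - ∑ i, ∑ j, if i = j then 0 else h (X i) (X j) * D X) ≤ ∫ X, D X * G X ^ 2 := by
    refine integral_mono (hDi.sub (integrable_finsetSum _ fun i _ => integrable_finsetSum _ fun j _ => hhD i j))
      hDG fun X => ?_
    have h1 := mul_le_mul_of_nonneg_left (G_lower g s hg1 X) (hD0 X)
    refine le_trans (le_of_eq ?_) h1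
    simp only [mul_sub, mul_one, Finset.mul_sum]
    congr 1
    refine Finset.sum_congr rfl fun i _ => Finset.sum_congr rfl fun j _ => ?_
    simp only [hh, mul_ite, mul_zero, ite_mul, mul_one, one_mul, zero_mul]
  refine le_trans ?_ hlow
  rw [integral_sub hDi (integrable_finsetSum _ fun i _ => integrable_finsetSum _ fun j _ => hhD i j),
    integral_finsetSum _ fun i _ => integrable_finsetSum _ fun j _ => hhD i j]
  have hsum : ∑ i : Fin n, ∫ X : Fin n → E3, ∑ j, (if i = j then 0 else h (X i) (X j) * D X) =
      ∑ i, ∑ j, (if i = j then 0 else ∫ X : Fin n → E3, h (X i) (X j) * D X) := by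
    refine Finset.sum_congr rfl fun i _ => ?_
    rw [integral_finsetSum _ fun j _ => hhD i j]
    refine Finset.sum_congr rfl fun j _ => ?_
    split_ifs <;> simp
  have key2 : ∑ i, ∑ j, (if i = j then 0 else ∫ X : Fin n → E3, h (X i) (X j) * D X) ≤ (∫ X, D X) * ε := by
    refine le_trans (le_of_eq key) ?_
    exact mul_le_mul_of_nonneg_left hε (integral_nonneg hD0)
  rw [hsum]
  linarith
end
end

section
/- There exists a constant C such that for every ℓ > 0, every n ≥ 1, and every set S ⊂ {1,2,3,…}³ with |S| = n satisfying |m| ≤ |m'| for all m ∈ S and m' ∈ {1,2,3,…}³ ∖ S, one has Σ_{m∈S} π² |m|² / ℓ² ≤ (3/5) (6π²)^{2/3} (n^{5/3}/ℓ²) ( 1 + C n^{−1/3} ). -/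
noncomputable section

open Real
open scoped BigOperators

lemma aux_sum_ge (r : ℝ) (hr : 0 ≤ r) (M : ℕ) (hM : r ≤ M + 1) (k : ℕ) :
    (∫ x in (0:ℝ)..r, √(r ^ 2 - x ^ 2) ^ k) - r ^ k ≤
      ∑ i ∈ Finset.range M, √(r ^ 2 - ((i:ℝ) + 1) ^ 2) ^ k := by
  have hanti : AntitoneOn (fun x : ℝ => √(r ^ 2 - x ^ 2) ^ k)
      (Set.Icc (0:ℝ) (0 + ((M + 1 : ℕ) : ℝ))) := by
    intro x hx y hy hxy
    have h0 : 0 ≤ x := hx.1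
    have : x ^ 2 ≤ y ^ 2 := by gcongr
    show √(r ^ 2 - y ^ 2) ^ k ≤ √(r ^ 2 - x ^ 2) ^ k
    gcongr
  have h1 := hanti.integral_le_sum
  have hcont : Continuous (fun x : ℝ => √(r ^ 2 - x ^ 2) ^ k) := by fun_prop
  have h2 : (∫ x in (0:ℝ)..r, √(r ^ 2 - x ^ 2) ^ k) ≤
      ∫ x in (0:ℝ)..(0 + ((M + 1 : ℕ) : ℝ)), √(r ^ 2 - x ^ 2) ^ k := by
    apply intervalIntegral.integral_mono_interval le_rfl hr (by push_cast; linarith)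
    · exact Filter.Eventually.of_forall (fun x => by positivity)
    · exact hcont.intervalIntegrable _ _
  rw [Finset.sum_range_succ'] at h1
  have h3 : √(r ^ 2 - (0 + ((0:ℕ):ℝ)) ^ 2) ^ k = r ^ k := by
    simp [Real.sqrt_sq hr]
  rw [h3] at h1
  have h4 : ∑ i ∈ Finset.range M, √(r ^ 2 - (0 + ((i + 1 : ℕ):ℝ)) ^ 2) ^ k =
    ∑ i ∈ Finset.range M, √(r ^ 2 - ((i:ℝ) + 1) ^ 2) ^ k := by
    simp
  linarith

lemma aux_int2 (r : ℝ) (hr : 0 ≤ r) :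
    (∫ x in (0:ℝ)..r, √(r ^ 2 - x ^ 2) ^ 2) = 2 / 3 * r ^ 3 := by
  have : (∫ x in (0:ℝ)..r, √(r ^ 2 - x ^ 2) ^ 2) = ∫ x in (0:ℝ)..r, (r ^ 2 - x ^ 2) := by
    apply intervalIntegral.integral_congr
    intro x hx
    rw [Set.uIcc_of_le hr] at hx
    have : 0 ≤ r ^ 2 - x ^ 2 := by nlinarith [hx.1, hx.2]
    simp only [Real.sq_sqrt this]
  rw [this, intervalIntegral.integral_sub (by simp) (by simp)]
  simp [integral_pow]
  ring

lemma aux_int4 (r : ℝ) (hr : 0 ≤ r) :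
    (∫ x in (0:ℝ)..r, √(r ^ 2 - x ^ 2) ^ 4) = 8 / 15 * r ^ 5 := by
  have : (∫ x in (0:ℝ)..r, √(r ^ 2 - x ^ 2) ^ 4) =
      ∫ x in (0:ℝ)..r, (r ^ 2 - x ^ 2) ^ 2 := by
    apply intervalIntegral.integral_congr
    intro x hx
    rw [Set.uIcc_of_le hr] at hx
    have : 0 ≤ r ^ 2 - x ^ 2 := by nlinarith [hx.1, hx.2]
    show √(r ^ 2 - x ^ 2) ^ 4 = (r ^ 2 - x ^ 2) ^ 2
    rw [show (4:ℕ) = 2 * 2 by rfl, pow_mul, Real.sq_sqrt this]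
  rw [this]
  rw [intervalIntegral.integral_eq_sub_of_hasDerivAt
    (f := fun x => r ^ 4 * x - 2 * r ^ 2 * (x ^ 3 / 3) + x ^ 5 / 5)]
  · ring
  · intro x _
    have h := (((hasDerivAt_id x).const_mul (r ^ 4)).sub
      (((hasDerivAt_pow 3 x).div_const 3).const_mul (2 * r ^ 2))).add
      ((hasDerivAt_pow 5 x).div_const 5)
    refine h.congr_deriv ?_
    norm_num
    ring
  · exact (by fun_prop : Continuous fun x : ℝ => (r ^ 2 - x ^ 2) ^ 2).intervalIntegrable _ _

lemma aux_int3 (r : ℝ) (hr : 0 ≤ r) :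
    (∫ x in (0:ℝ)..r, √(r ^ 2 - x ^ 2) ^ 3) = 3 * π / 16 * r ^ 4 := by
  rcases hr.eq_or_lt with rfl | hr0
  · simp
  rw [intervalIntegral.integral_eq_sub_of_hasDerivAt_of_le
    (f := fun x => x * √(r ^ 2 - x ^ 2) ^ 3 / 4 + 3 / 8 * r ^ 2 *
      (x * √(r ^ 2 - x ^ 2) + r ^ 2 * arcsin (x / r))) hr]
  · simp [hr0.ne']
    ring
  · apply Continuous.continuousOn
    have := Real.continuous_arcsin
    fun_prop
  · intro x hx
    have hpos : 0 < r ^ 2 - x ^ 2 := by nlinarith [hx.1, hx.2]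
    have hs : 0 < √(r ^ 2 - x ^ 2) := Real.sqrt_pos.2 hpos
    have hs2 : √(r ^ 2 - x ^ 2) ^ 2 = r ^ 2 - x ^ 2 := Real.sq_sqrt hpos.le
    have d1 : HasDerivAt (fun x : ℝ => √(r ^ 2 - x ^ 2)) (-x / √(r ^ 2 - x ^ 2)) x := by
      have := ((hasDerivAt_pow 2 x).const_sub (r ^ 2)).sqrt hpos.ne'
      refine this.congr_deriv ?_
      field_simp
      norm_num
    have hx1 : x / r < 1 := by rw [div_lt_one hr0]; exact hx.2
    have hx0 : 0 < x / r := div_pos hx.1 hr0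
    have d2 : HasDerivAt (fun x : ℝ => arcsin (x / r)) (1 / √(r ^ 2 - x ^ 2)) x := by
      have h := (Real.hasDerivAt_arcsin (x := x / r) (by linarith) hx1.ne).comp x
        ((hasDerivAt_id x).div_const r)
      refine h.congr_deriv ?_
      have : √(1 - (x / r) ^ 2) = √(r ^ 2 - x ^ 2) / r := by
        rw [show 1 - (x / r) ^ 2 = (r ^ 2 - x ^ 2) / r ^ 2 by field_simp,
          Real.sqrt_div hpos.le, Real.sqrt_sq hr]
      rw [this]
      field_simp
    have d := (((hasDerivAt_id x).mul (d1.pow 3)).div_const 4).add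
      ((((hasDerivAt_id x).mul d1).add (d2.const_mul (r ^ 2))).const_mul (3 / 8 * r ^ 2))
    refine d.congr_deriv ?_
    simp only [id, Pi.pow_apply]
    generalize √(r ^ 2 - x ^ 2) = s at *
    have hx2 : x ^ 2 = r ^ 2 - s ^ 2 := by linarith
    field_simp
    norm_num
    ring_nf
    rw [show s ^ 4 = s ^ 2 * s ^ 2 by ring, hs2]
    ring
  · exact (by fun_prop : Continuous fun x : ℝ => √(r ^ 2 - x ^ 2) ^ 3).intervalIntegrable _ _

lemma aux_sum_ge' (t c : ℝ) (M : ℕ) (hM : t ≤ ((M:ℝ) + 1) ^ 2) (k : ℕ) (hk : k ≠ 0)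
    (hc : ∀ r : ℝ, 0 ≤ r → (∫ x in (0:ℝ)..r, √(r ^ 2 - x ^ 2) ^ k) = c * r ^ (k + 1)) :
    c * √t ^ (k + 1) - √t ^ k ≤
      ∑ i ∈ Finset.range M, √(t - ((i:ℝ) + 1) ^ 2) ^ k := by
  rcases le_total 0 t with h | h
  · have := aux_sum_ge (√t) (Real.sqrt_nonneg t) M
      (Real.sqrt_le_iff.2 ⟨by positivity, hM⟩) k
    rwa [hc _ (Real.sqrt_nonneg t), Real.sq_sqrt h] at this
  · rw [Real.sqrt_eq_zero_of_nonpos h]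
    simp only [ne_eq, hk, not_false_eq_true, zero_pow, Nat.succ_ne_zero, mul_zero, sub_zero]
    positivity

lemma aux_triple (E M : ℕ) (h1 : M * M ≤ E) (h2 : E < (M + 1) * (M + 1)) :
    π / 15 * √(E:ℝ) ^ 5 - 3 * √(E:ℝ) ^ 4 ≤
    ∑ i ∈ Finset.range M, ∑ j ∈ Finset.range M, ∑ k ∈ Finset.range M,
      √((E:ℝ) - ((i:ℝ) + 1) ^ 2 - ((j:ℝ) + 1) ^ 2 - ((k:ℝ) + 1) ^ 2) ^ 2 := by
  have h1' : (M:ℝ) ^ 2 ≤ E := by exact_mod_cast (by nlinarith : M ^ 2 ≤ E)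
  have h2' : (E:ℝ) ≤ ((M:ℝ) + 1) ^ 2 := by exact_mod_cast (by nlinarith : E ≤ (M + 1) ^ 2)
  set R := √(E:ℝ) with hR
  have hR0 : 0 ≤ R := Real.sqrt_nonneg _
  have hMR : (M:ℝ) ≤ R := Real.le_sqrt_of_sq_le h1'
  have hle : ∀ t : ℝ, t ≤ E → √t ≤ R := fun t ht => Real.sqrt_le_sqrt ht
  -- innermost
  have s1 : ∀ i j : ℕ, 2 / 3 * √((E:ℝ) - ((i:ℝ) + 1) ^ 2 - ((j:ℝ) + 1) ^ 2) ^ 3 - R ^ 2 ≤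
      ∑ k ∈ Finset.range M,
      √((E:ℝ) - ((i:ℝ) + 1) ^ 2 - ((j:ℝ) + 1) ^ 2 - ((k:ℝ) + 1) ^ 2) ^ 2 := by
    intro i j
    have ht : (E:ℝ) - ((i:ℝ) + 1) ^ 2 - ((j:ℝ) + 1) ^ 2 ≤ E := by
      nlinarith [sq_nonneg ((i:ℝ) + 1), sq_nonneg ((j:ℝ) + 1)]
    have h := aux_sum_ge' ((E:ℝ) - ((i:ℝ) + 1) ^ 2 - ((j:ℝ) + 1) ^ 2) (2 / 3) M
      (ht.trans h2') 2 (by norm_num) aux_int2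
    have h' := pow_le_pow_left₀ (Real.sqrt_nonneg _) (hle _ ht) 2
    norm_num at h
    linarith
  have s2 : ∀ i : ℕ, π / 8 * √((E:ℝ) - ((i:ℝ) + 1) ^ 2) ^ 4 - 2 / 3 * R ^ 3 - M * R ^ 2 ≤
      ∑ j ∈ Finset.range M, ∑ k ∈ Finset.range M,
      √((E:ℝ) - ((i:ℝ) + 1) ^ 2 - ((j:ℝ) + 1) ^ 2 - ((k:ℝ) + 1) ^ 2) ^ 2 := by
    intro i
    have ht : (E:ℝ) - ((i:ℝ) + 1) ^ 2 ≤ E := by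
      nlinarith [sq_nonneg ((i:ℝ) + 1)]
    have h := aux_sum_ge' ((E:ℝ) - ((i:ℝ) + 1) ^ 2) (3 * π / 16) M
      (ht.trans h2') 3 (by norm_num) aux_int3
    have h' := pow_le_pow_left₀ (Real.sqrt_nonneg _) (hle _ ht) 3
    have hs := Finset.sum_le_sum (fun j (_ : j ∈ Finset.range M) => s1 i j)
    rw [Finset.sum_sub_distrib, ← Finset.mul_sum, Finset.sum_const, Finset.card_range,
      nsmul_eq_mul] at hs
    norm_num at h
    linarith
  have hs := Finset.sum_le_sum (fun i (_ : i ∈ Finset.range M) => s2 i)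
  rw [Finset.sum_sub_distrib, Finset.sum_sub_distrib, ← Finset.mul_sum, Finset.sum_const,
    Finset.sum_const, Finset.card_range, nsmul_eq_mul, nsmul_eq_mul] at hs
  have h := aux_sum_ge' (E:ℝ) (8 / 15) M h2' 4 (by norm_num) aux_int4
  norm_num at h
  rw [← hR] at h
  have hpi := Real.pi_pos
  have hpi4 := Real.pi_lt_four
  have e0 := mul_le_mul_of_nonneg_left h (show 0 ≤ π / 8 by positivity)
  have e1 : (M:ℝ) * (2 / 3 * R ^ 3) ≤ 2 / 3 * R ^ 4 := by
    nlinarith [mul_le_mul_of_nonneg_right hMR (show 0 ≤ R ^ 3 by positivity)]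
  have e2 : (M:ℝ) * (M * R ^ 2) ≤ R ^ 4 := by
    calc (M:ℝ) * (M * R ^ 2) ≤ R * (R * R ^ 2) := by gcongr
      _ = R ^ 4 := by ring
  have e3 : π / 8 * R ^ 4 ≤ 1 / 2 * R ^ 4 := by
    apply mul_le_mul_of_nonneg_right _ (by positivity)
    linarith
  have e4 : 0 ≤ R ^ 4 := by positivity
  linarith

lemma aux_fermi (n : ℕ) (S : Finset (Fin 3 → ℕ)) (hn : 1 ≤ n) (hS : S.card = n)
    (hpos : ∀ m ∈ S, ∀ a, 1 ≤ m a)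
    (hmin : ∀ m ∈ S, ∀ m' : Fin 3 → ℕ, (∀ a, 1 ≤ m' a) → m' ∉ S →
        (∑ a, (m a) ^ 2) ≤ ∑ a, (m' a) ^ 2) :
    ∃ R : ℝ, 1 ≤ R ∧ (∑ m ∈ S, ∑ a, (m a : ℝ) ^ 2) ≤
      n * R ^ 2 - π / 15 * R ^ 5 + 3 * R ^ 4 := by
  have hne : S.Nonempty := by
    rw [← Finset.card_pos]; omega
  obtain ⟨m0, hm0, hmax⟩ := Finset.exists_max_image S (fun m => ∑ a, (m a) ^ 2) hne
  set E : ℕ := ∑ a, (m0 a) ^ 2 with hE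
  have hE1 : 1 ≤ E := by
    have := hpos m0 hm0 0
    rw [hE, Fin.sum_univ_three]
    nlinarith [Nat.zero_le (m0 1 ^ 2), Nat.zero_le (m0 2 ^ 2)]
  refine ⟨√(E:ℝ), ?_, ?_⟩
  · rw [Real.one_le_sqrt]; exact_mod_cast hE1
  have hT := aux_triple E (Nat.sqrt E) (Nat.sqrt_le E) (Nat.lt_succ_sqrt E)
  set M := Nat.sqrt E
  have key : (∑ i ∈ Finset.range M, ∑ j ∈ Finset.range M, ∑ k ∈ Finset.range M,
      √((E:ℝ) - ((i:ℝ) + 1) ^ 2 - ((j:ℝ) + 1) ^ 2 - ((k:ℝ) + 1) ^ 2) ^ 2) ≤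
      ∑ m ∈ S, ((E:ℝ) - ∑ a, (m a : ℝ) ^ 2) := by
    let φ : ℕ × ℕ × ℕ → (Fin 3 → ℕ) := fun x => ![x.1 + 1, x.2.1 + 1, x.2.2 + 1]
    have hφ : Function.Injective φ := by
      rintro ⟨a, b, c⟩ ⟨a', b', c'⟩ h
      have e0 := congrFun h 0
      have e1 := congrFun h 1
      have e2 := congrFun h 2
      simp [φ] at e0 e1 e2
      simp [e0, e1, e2]
    let g : (Fin 3 → ℕ) → ℝ := fun m => √((E:ℝ) - ∑ a, (m a : ℝ) ^ 2) ^ 2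
    have hg : (∑ i ∈ Finset.range M, ∑ j ∈ Finset.range M, ∑ k ∈ Finset.range M,
      √((E:ℝ) - ((i:ℝ) + 1) ^ 2 - ((j:ℝ) + 1) ^ 2 - ((k:ℝ) + 1) ^ 2) ^ 2) =
      ∑ m ∈ (Finset.range M ×ˢ Finset.range M ×ˢ Finset.range M).image φ, g m := by
      rw [Finset.sum_image (fun a _ b _ h => hφ h), Finset.sum_product]
      refine Finset.sum_congr rfl fun i _ => ?_
      rw [Finset.sum_product]
      refine Finset.sum_congr rfl fun j _ => Finset.sum_congr rfl fun k _ => ?_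
      simp [g, φ, Fin.sum_univ_three]
      rw [← sub_sub, ← sub_sub]
    rw [hg]
    have hgS : ∀ m ∈ S, g m = (E:ℝ) - ∑ a, (m a : ℝ) ^ 2 := by
      intro m hm
      apply Real.sq_sqrt
      have : ((∑ a, (m a) ^ 2 : ℕ) : ℝ) ≤ E := by exact_mod_cast hmax m hm
      push_cast at this
      linarith
    rw [← Finset.sum_congr rfl hgS]
    rw [← Finset.sum_filter_ne_zero]
    refine Finset.sum_le_sum_of_subset_of_nonneg ?_ (fun m _ _ => by positivity)
    intro m hmf
    obtain ⟨hm, hgm⟩ := Finset.mem_filter.1 hmf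
    by_contra hmS
    apply hgm
    obtain ⟨x, -, rfl⟩ := Finset.mem_image.1 hm
    have h1 : ∀ a, 1 ≤ φ x a := by
      intro a
      fin_cases a <;> simp [φ]
    have h2 := hmin m0 hm0 _ h1 hmS
    rw [← hE] at h2
    have h3 : (E:ℝ) ≤ ((∑ a, (φ x a) ^ 2 : ℕ) : ℝ) := by exact_mod_cast h2
    push_cast at h3
    show √((E:ℝ) - ∑ a, (φ x a : ℝ) ^ 2) ^ 2 = 0
    rw [Real.sqrt_eq_zero_of_nonpos (by linarith)]
    norm_num
  rw [Finset.sum_sub_distrib, Finset.sum_const, hS, nsmul_eq_mul] at key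
  rw [Real.sq_sqrt (Nat.cast_nonneg E)]
  linarith

lemma aux_opt (q R A : ℝ) (hq : 1 ≤ q) (hR : 1 ≤ R) (hA : 0 < A) (hA3 : A ^ 3 = 6 * π ^ 2) :
    π ^ 2 * (q ^ 3 * R ^ 2 - π / 15 * R ^ 5 + 3 * R ^ 4) ≤
      3 / 5 * A ^ 2 * q ^ 5 + π ^ 2 * (3 * 20 ^ 4) * q ^ 4 := by
  have hpi := Real.pi_pos
  have hpi3 := Real.pi_gt_three
  rcases le_total R (20 * q) with h | h
  · have e1 : R ^ 4 ≤ 20 ^ 4 * q ^ 4 := by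
      rw [← mul_pow]; gcongr
    have e2 : π ^ 2 * (q ^ 3 * R ^ 2 - π / 15 * R ^ 5) ≤ 3 / 5 * A ^ 2 * q ^ 5 := by
      have hp : 0 ≤ (π * R - A * q) ^ 2 * (2 * (π * R) ^ 3 + 4 * (A * q) * (π * R) ^ 2
        + 6 * (A * q) ^ 2 * (π * R) + 3 * (A * q) ^ 3) := by positivity
      have hid : (π * R - A * q) ^ 2 * (2 * (π * R) ^ 3 + 4 * (A * q) * (π * R) ^ 2
        + 6 * (A * q) ^ 2 * (π * R) + 3 * (A * q) ^ 3) =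
        5 * A ^ 3 * (3 / 5 * A ^ 2 * q ^ 5) - 5 * (A ^ 3 * q ^ 3 * π ^ 2 * R ^ 2)
        + 2 * π ^ 5 * R ^ 5 := by ring
      have hid2 : 2 * π ^ 5 * R ^ 5 = 5 * A ^ 3 * (π ^ 2 * (π / 15 * R ^ 5)) := by
        rw [hA3]; ring
      rw [hid, hid2] at hp
      have hA3' : 0 < 5 * A ^ 3 := by positivity
      refine le_of_mul_le_mul_left ?_ hA3'
      linarith
    have e3 := mul_le_mul_of_nonneg_left e1 (show 0 ≤ 3 * π ^ 2 by positivity)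
    linarith
  · have hneg : q ^ 3 * R ^ 2 - π / 15 * R ^ 5 + 3 * R ^ 4 ≤ 0 := by
      have a1 : q ^ 3 ≤ (R / 20) ^ 3 := by
        gcongr; linarith
      have a2 := mul_le_mul_of_nonneg_right a1 (show 0 ≤ R ^ 2 by positivity)
      have a3 : R ^ 4 ≤ R ^ 5 / 20 := by
        have : 20 ≤ R := by linarith
        nlinarith [show 0 ≤ R ^ 4 by positivity]
      have a4 := mul_le_mul_of_nonneg_right hpi3.le (show 0 ≤ R ^ 5 by positivity)
      have a5 : 0 ≤ R ^ 5 := by positivity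
      linarith
    have : π ^ 2 * (q ^ 3 * R ^ 2 - π / 15 * R ^ 5 + 3 * R ^ 4) ≤ 0 :=
      mul_nonpos_of_nonneg_of_nonpos (by positivity) hneg
    have : 0 ≤ 3 / 5 * A ^ 2 * q ^ 5 + π ^ 2 * (3 * 20 ^ 4) * q ^ 4 := by positivity
    linarith

theorem sum_lowest_dirichlet_eigenvalues :
    ∃ C : ℝ, ∀ (ℓ : ℝ) (n : ℕ) (S : Finset (Fin 3 → ℕ)),
      0 < ℓ → 1 ≤ n → S.card = n →
      (∀ m ∈ S, ∀ a, 1 ≤ m a) →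
      (∀ m ∈ S, ∀ m' : Fin 3 → ℕ, (∀ a, 1 ≤ m' a) → m' ∉ S →
        (∑ a, (m a) ^ 2) ≤ ∑ a, (m' a) ^ 2) →
      (∑ m ∈ S, π ^ 2 * (∑ a, (m a : ℝ) ^ 2) / ℓ ^ 2)
        ≤ (3 / 5) * (6 * π ^ 2) ^ ((2:ℝ)/3) * ((n : ℝ) ^ ((5:ℝ)/3) / ℓ ^ 2) *
            (1 + C * (n : ℝ) ^ (-(1:ℝ)/3)) := by
  have hpi := Real.pi_pos
  obtain ⟨A, hAdef⟩ : ∃ A : ℝ, A = (6 * π ^ 2) ^ ((1:ℝ)/3) := ⟨_, rfl⟩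
  have hB : (0:ℝ) < 6 * π ^ 2 := by positivity
  have hA : 0 < A := by rw [hAdef]; positivity
  have hA3 : A ^ 3 = 6 * π ^ 2 := by
    rw [hAdef, ← Real.rpow_natCast, ← Real.rpow_mul hB.le]; norm_num
  have hA2 : (6 * π ^ 2) ^ ((2:ℝ)/3) = A ^ 2 := by
    rw [hAdef, ← Real.rpow_natCast (_ ^ ((1:ℝ)/3)) 2, ← Real.rpow_mul hB.le]; norm_num
  refine ⟨π ^ 2 * (3 * 20 ^ 4) / (3 / 5 * A ^ 2), ?_⟩
  intro ℓ n S hℓ hn hS hpos hmin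
  obtain ⟨R, hR, hle⟩ := aux_fermi n S hn hS hpos hmin
  have hn' : (1:ℝ) ≤ n := by exact_mod_cast hn
  have hn0 : (0:ℝ) < n := by linarith
  obtain ⟨q, hqdef⟩ : ∃ q : ℝ, q = (n:ℝ) ^ ((1:ℝ)/3) := ⟨_, rfl⟩
  have hq : 1 ≤ q := by rw [hqdef]; exact Real.one_le_rpow hn' (by norm_num)
  have hq3 : (n:ℝ) = q ^ 3 := by
    rw [hqdef, ← Real.rpow_natCast, ← Real.rpow_mul hn0.le]; norm_num
  have hq5 : (n:ℝ) ^ ((5:ℝ)/3) = q ^ 5 := by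
    rw [hqdef, ← Real.rpow_natCast, ← Real.rpow_mul hn0.le]; norm_num
  have hqi : (n:ℝ) ^ (-(1:ℝ)/3) = q⁻¹ := by
    rw [hqdef, ← Real.rpow_neg hn0.le]; norm_num
  rw [hA2, hq5, hqi]
  have hopt := aux_opt q R A hq hR hA hA3
  rw [← hq3] at hopt
  have h1 := (mul_le_mul_of_nonneg_left hle (show 0 ≤ π ^ 2 by positivity)).trans hopt
  rw [← Finset.sum_div, ← Finset.mul_sum]
  have hq0 : 0 < q := by linarith
  have hrhs : (3 / 5) * A ^ 2 * (q ^ 5 / ℓ ^ 2) *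
      (1 + π ^ 2 * (3 * 20 ^ 4) / (3 / 5 * A ^ 2) * q⁻¹) =
      (3 / 5 * A ^ 2 * q ^ 5 + π ^ 2 * (3 * 20 ^ 4) * q ^ 4) / ℓ ^ 2 := by
    field_simp
  rw [hrhs]
  gcongr
end
end
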